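/- Suppose A ⊂ F_p satisfies |A| ≪ p^{32/55}. Then max{|A-A|, |AA|} ≳ |A|^{39/32}. -/

import Mathlib

open Pointwise


namespace SP
open MvPolynomial

/-- Elimination for one prime polynomial in one variable over a domain. -/
lemma resultant_ne_zero_of_prime {A : Type*} [CommRing A] [IsDomain A]
    (f g : Polynomial A) (hf : Prime f) (hdeg : 0 < f.natDegree) (hfg : ¬ f ∣ g) :
    f.resultant g ≠ 0 := by
  intro h0
  have hdet : ((Polynomial.sylvesterMap f g le_rfl le_rfl).toMatrix
      (((Polynomial.degreeLT.basis _ _).prod (Polynomial.degreeLT.basis _ _)).reindex finSumFinEquiv)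
      (Polynomial.degreeLT.basis _ _)).det = 0 := by
    rw [Polynomial.toMatrix_sylvesterMap']; exact h0
  obtain ⟨v, hv, hv0⟩ := Matrix.exists_mulVec_eq_zero_iff.mpr hdet
  set b₁ := (((Polynomial.degreeLT.basis A f.natDegree).prod
    (Polynomial.degreeLT.basis A g.natDegree)).reindex finSumFinEquiv) with hb₁
  set b₂ := Polynomial.degreeLT.basis A (f.natDegree + g.natDegree)
  set x := b₁.equivFun.symm v with hx
  have hxne : x ≠ 0 := by
    intro h
    apply hv
    have : b₁.equivFun x = v := b₁.equivFun.apply_symm_apply v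
    rw [← this, h]; simp
  have hmap : Polynomial.sylvesterMap f g le_rfl le_rfl x = 0 := by
    have h1 := LinearMap.toMatrix_mulVec_repr b₁ b₂ (Polynomial.sylvesterMap f g le_rfl le_rfl) x
    have h2 : (b₁.repr x : Fin (f.natDegree + g.natDegree) → A) = v := by
      have : b₁.equivFun x = v := b₁.equivFun.apply_symm_apply v
      rw [← this]; rfl
    rw [h2, hv0] at h1
    have : b₂.repr (Polynomial.sylvesterMap f g le_rfl le_rfl x) = 0 := by
      ext i; exact (congrFun h1 i).symm
    simpa using this
  have hval : f * (x.2 : Polynomial A) + g * (x.1 : Polynomial A) = 0 := by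
    have := congrArg Subtype.val hmap
    simpa using this
  have hd1 : f ∣ g * (x.1 : Polynomial A) := by
    refine ⟨-(x.2 : Polynomial A), ?_⟩
    linear_combination hval
  have hx1 : (x.1 : Polynomial A) = 0 := by
    rcases hf.dvd_or_dvd hd1 with h | h
    · exact absurd h hfg
    · by_contra hne
      have h3 := Polynomial.natDegree_le_of_dvd h hne
      have h4 : (x.1 : Polynomial A).degree < (f.natDegree : ℕ) :=
        Polynomial.mem_degreeLT.mp x.1.2
      rw [Polynomial.degree_eq_natDegree hne] at h4
      have h5 : (x.1 : Polynomial A).natDegree < f.natDegree := by exact_mod_cast h4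
      omega
  have hx2 : (x.2 : Polynomial A) = 0 := by
    rw [hx1, mul_zero, add_zero] at hval
    exact (mul_eq_zero.mp hval).resolve_left hf.ne_zero
  apply hxne
  exact Prod.ext (Subtype.ext hx1) (Subtype.ext hx2)

variable {F : Type*} [Field F]

lemma totalDegree_det_le {σ : Type*} {n : ℕ} (M : Matrix (Fin n) (Fin n) (MvPolynomial σ F)) (d : ℕ)
    (h : ∀ i j, (M i j).totalDegree ≤ d) : M.det.totalDegree ≤ n * d := by
  rw [Matrix.det_apply]
  refine totalDegree_finsetSum_le (fun τ _ => ?_)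
  have h1 : (∏ i, M (τ i) i).totalDegree ≤ n * d := by
    refine (totalDegree_finsetProd _ _).trans ?_
    refine (Finset.sum_le_sum (fun i _ => h (τ i) i)).trans ?_
    simp
  rcases Int.units_eq_one_or (Equiv.Perm.sign τ) with h2 | h2 <;> rw [h2] <;> simpa using h1

lemma totalDegree_coeff_fse_le {n : ℕ} (f : MvPolynomial (Fin (n+1)) F) (i : ℕ) :
    ((finSuccEquiv F n f).coeff i).totalDegree ≤ f.totalDegree := by
  by_cases h : (finSuccEquiv F n f).coeff i = 0
  · rw [h]; simp
  · have := totalDegree_coeff_finSuccEquiv_add_le f i h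
    omega

lemma finSuccEquiv_rename_succ {n : ℕ} (r : MvPolynomial (Fin n) F) :
    finSuccEquiv F n (rename Fin.succ r) = Polynomial.C r := by
  induction r using MvPolynomial.induction_on with
  | C a => 
    rw [rename_C]
    simp [finSuccEquiv_apply]
  | add p q hp hq => simp [hp, hq]
  | mul_X p i hp => 
    rw [map_mul, map_mul, hp, rename_X, finSuccEquiv_X_succ, map_mul]

/-- Elimination of the first variable. -/
lemma elim {n : ℕ} (f h : MvPolynomial (Fin (n+1)) F) (hf : Prime f)
    (hY : 0 < f.degreeOf 0) (hfh : ¬ f ∣ h) :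
    ∃ (r : MvPolynomial (Fin n) F) (u v : MvPolynomial (Fin (n+1)) F), r ≠ 0 ∧
      r.totalDegree ≤ (f.totalDegree + h.totalDegree) ^ 2 ∧
      f * u + h * v = rename Fin.succ r := by
  set f' := finSuccEquiv F n f with hf'
  set h' := finSuccEquiv F n h with hh'
  have hpf : Prime f' := (MulEquiv.prime_iff (finSuccEquiv F n).toMulEquiv).mpr hf
  have hdeg : 0 < f'.natDegree := by rw [hf', natDegree_finSuccEquiv]; exact hY
  have hnd : ¬ f' ∣ h' := by
    intro hd
    exact hfh ((map_dvd_iff (finSuccEquiv F n)).mp hd)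
  have hres := resultant_ne_zero_of_prime f' h' hpf hdeg hnd
  obtain ⟨p, q, -, -, hpq⟩ := Polynomial.exists_mul_add_mul_eq_C_resultant f' h' le_rfl le_rfl
    (Or.inl hdeg.ne')
  refine ⟨f'.resultant h', (finSuccEquiv F n).symm p, (finSuccEquiv F n).symm q, hres, ?_, ?_⟩
  · have h1 : (f'.resultant h').totalDegree ≤
        (f'.natDegree + h'.natDegree) * (f.totalDegree + h.totalDegree) := by
      apply totalDegree_det_le
      intro i j
      unfold Polynomial.sylvester
      simp only [Matrix.of_apply]
      refine Fin.addCases (fun j₁ => ?_) (fun j₁ => ?_) j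
      · simp only [Fin.addCases_left]
        split_ifs
        · exact (totalDegree_coeff_fse_le h _).trans (by omega)
        · simp
      · simp only [Fin.addCases_right]
        split_ifs
        · exact (totalDegree_coeff_fse_le f _).trans (by omega)
        · simp
    refine h1.trans ?_
    rw [sq]
    gcongr
    · rw [hf', natDegree_finSuccEquiv]; exact degreeOf_le_totalDegree _ _
    · rw [hh', natDegree_finSuccEquiv]; exact degreeOf_le_totalDegree _ _
  · apply (finSuccEquiv F n).injective
    rw [map_add, map_mul, map_mul]
    simp only [AlgEquiv.apply_symm_apply]
    rw [← hf', ← hh', hpq, finSuccEquiv_rename_succ]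

lemma aeval_one_injective :
    Function.Injective (aeval (R := F) (fun _ : Fin 1 => (Polynomial.X : Polynomial F))) := by
  apply Function.LeftInverse.injective (g := Polynomial.aeval (X 0 : MvPolynomial (Fin 1) F))
  intro r
  have : ((Polynomial.aeval (X 0 : MvPolynomial (Fin 1) F)).comp
      (aeval (fun _ : Fin 1 => (Polynomial.X : Polynomial F)))) = AlgHom.id F _ := by
    apply MvPolynomial.algHom_ext
    intro i
    fin_cases i
    simp
  exact AlgHom.congr_fun this r

lemma aeval_two_eq (r : MvPolynomial (Fin 2) F) (b : F) :
    aeval ![Polynomial.C b, Polynomial.X] r =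
      aeval (fun _ : Fin 1 => (Polynomial.X : Polynomial F))
        ((finSuccEquiv F 1 r).eval (C b)) := by
  induction r using MvPolynomial.induction_on with
  | C a => simp [finSuccEquiv_apply]
  | add p q hp hq => simp [hp, hq]
  | mul_X p i hp =>
    rw [map_mul, hp, map_mul, Polynomial.eval_mul, map_mul]
    congr 1
    refine Fin.cases ?_ (fun j => ?_) i
    · rw [finSuccEquiv_X_zero]; simp
    · rw [finSuccEquiv_X_succ]; fin_cases j; simp

lemma count_lines (r : MvPolynomial (Fin 2) F) (hr : r ≠ 0) (s : Finset F)
    (hs : ∀ b ∈ s, aeval ![Polynomial.C b, Polynomial.X] r = 0) : s.card ≤ r.totalDegree := by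
  classical
  set P := finSuccEquiv F 1 r with hP
  have hP0 : P ≠ 0 := by
    intro h; exact hr ((map_eq_zero_iff _ (finSuccEquiv F 1).injective).mp h)
  have hroot : ∀ b ∈ s, P.IsRoot (C b) := by
    intro b hb
    have := hs b hb
    rw [aeval_two_eq] at this
    exact (map_eq_zero_iff _ aeval_one_injective).mp this
  have hsub : s.image (fun b => (C b : MvPolynomial (Fin 1) F)) ⊆ P.roots.toFinset := by
    intro x hx
    obtain ⟨b, hb, rfl⟩ := Finset.mem_image.mp hx
    rw [Multiset.mem_toFinset, Polynomial.mem_roots hP0]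
    exact hroot b hb
  have h1 := Finset.card_le_card hsub
  rw [Finset.card_image_of_injective _ (C_injective _ _)] at h1
  calc s.card ≤ _ := h1
    _ ≤ _ := Multiset.toFinset_card_le _
    _ ≤ P.natDegree := Polynomial.card_roots' P
    _ = r.degreeOf 0 := natDegree_finSuccEquiv r
    _ ≤ _ := degreeOf_le_totalDegree _ _

/-- The first family of lines: `Z = x`, `Y = y W + z` (parameter `W`). -/
noncomputable def l1 (s : F × F × F) : Fin 3 → Polynomial F :=
  ![Polynomial.C s.2.1 * Polynomial.X + Polynomial.C s.2.2, Polynomial.X, Polynomial.C s.1]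

/-- The second family of lines: `W = x`, `Y = y Z + z` (parameter `Z`). -/
noncomputable def l2 (s : F × F × F) : Fin 3 → Polynomial F :=
  ![Polynomial.C s.2.1 * Polynomial.X + Polynomial.C s.2.2, Polynomial.C s.1, Polynomial.X]

lemma aeval_l2_rename (t : F × F × F) (r : MvPolynomial (Fin 2) F) :
    aeval (l2 t) (rename Fin.succ r) = aeval ![Polynomial.C t.1, Polynomial.X] r := by
  rw [aeval_rename]
  congr 2

/-- A prime surface and another one share few lines of the second family. -/
lemma bezout_lines (f h : MvPolynomial (Fin 3) F) (hf : Prime f) (hY : 0 < f.degreeOf 0)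
    (hfh : ¬ f ∣ h) (T : Finset (F × F × F)) (hinj : Set.InjOn Prod.fst (T : Set (F × F × F)))
    (h1 : ∀ t ∈ T, aeval (l2 t) f = 0) (h2 : ∀ t ∈ T, aeval (l2 t) h = 0) :
    T.card ≤ (f.totalDegree + h.totalDegree) ^ 2 := by
  classical
  obtain ⟨r, u, v, hr, hdeg, huv⟩ := elim f h hf hY hfh
  rw [← Finset.card_image_of_injOn hinj]
  refine (count_lines r hr _ ?_).trans hdeg
  intro b hb
  obtain ⟨t, ht, rfl⟩ := Finset.mem_image.mp hb
  rw [← aeval_l2_rename, ← huv, map_add, map_mul, map_mul, h1 t ht, h2 t ht]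
  simp

/-- A polynomial without `Y` contains few lines of the second family. -/
lemma noY_lines (f : MvPolynomial (Fin 3) F) (hf : f ≠ 0) (hY : f.degreeOf 0 = 0)
    (T : Finset (F × F × F)) (hinj : Set.InjOn Prod.fst (T : Set (F × F × F)))
    (h1 : ∀ t ∈ T, aeval (l2 t) f = 0) : T.card ≤ f.totalDegree := by
  classical
  have h0 : (finSuccEquiv F 2 f).natDegree = 0 := by rw [natDegree_finSuccEquiv]; exact hY
  set r := (finSuccEquiv F 2 f).coeff 0 with hrdef
  have hr : finSuccEquiv F 2 f = Polynomial.C r := Polynomial.eq_C_of_natDegree_eq_zero h0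
  have hfr : f = rename Fin.succ r := by
    apply (finSuccEquiv F 2).injective
    rw [hr, finSuccEquiv_rename_succ]
  have hr0 : r ≠ 0 := by
    rintro h; apply hf; rw [hfr, h]; simp
  rw [← Finset.card_image_of_injOn hinj]
  refine (count_lines r hr0 _ ?_).trans (totalDegree_coeff_fse_le f 0)
  intro b hb
  obtain ⟨t, ht, rfl⟩ := Finset.mem_image.mp hb
  rw [← aeval_l2_rename, ← hfr, h1 t ht]

end SP

namespace SP
open MvPolynomial
variable {F : Type*} [Field F]

/-- coefficientwise derivation -/
noncomputable def dh {R : Type*} [CommRing R] [Algebra F R] (D : Derivation F R R)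
    (p : Polynomial R) : Polynomial R :=
  ∑ i ∈ p.support, Polynomial.monomial i (D (p.coeff i))

lemma coeff_dh {R : Type*} [CommRing R] [Algebra F R] (D : Derivation F R R)
    (p : Polynomial R) (n : ℕ) : (dh D p).coeff n = D (p.coeff n) := by
  classical
  unfold dh
  rw [Polynomial.finset_sum_coeff]
  simp only [Polynomial.coeff_monomial]
  rw [Finset.sum_ite_eq' p.support n]
  split_ifs with h
  · rfl
  · rw [Polynomial.notMem_support_iff.mp h]; simp

lemma dh_add {R : Type*} [CommRing R] [Algebra F R] (D : Derivation F R R)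
    (p q : Polynomial R) : dh D (p + q) = dh D p + dh D q := by
  ext n; simp [coeff_dh]

lemma dh_mul {R : Type*} [CommRing R] [Algebra F R] (D : Derivation F R R)
    (p q : Polynomial R) : dh D (p * q) = p * dh D q + q * dh D p := by
  ext n
  rw [mul_comm q]
  simp only [coeff_dh, Polynomial.coeff_mul, Polynomial.coeff_add, map_sum, Derivation.leibniz,
    smul_eq_mul, Finset.sum_add_distrib]
  congr 1
  exact Finset.sum_congr rfl fun _ _ => mul_comm _ _

lemma chain {S : Type*} [CommRing S] [Algebra F S] (Δ : S → S)
    (hadd : ∀ a b, Δ (a + b) = Δ a + Δ b) (hmul : ∀ a b, Δ (a * b) = a * Δ b + b * Δ a)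
    (hc : ∀ c : F, Δ (algebraMap F S c) = 0) (v : Fin 3 → S) (f : MvPolynomial (Fin 3) F) :
    Δ (aeval v f) = aeval v (pderiv 0 f) * Δ (v 0) + aeval v (pderiv 1 f) * Δ (v 1)
      + aeval v (pderiv 2 f) * Δ (v 2) := by
  induction f using MvPolynomial.induction_on with
  | C a => simp [hc]
  | add p q hp hq => simp only [map_add, hadd, hp, hq]; ring
  | mul_X p i hp =>
    simp only [map_mul, aeval_X, hmul, hp, Derivation.leibniz, smul_eq_mul, map_add, pderiv_X]
    fin_cases i <;> simp [Pi.single_apply] <;> ring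

/-- tangent derivation -/
noncomputable def tD (f : MvPolynomial (Fin 3) F) :
    Derivation F (MvPolynomial (Fin 3) F) (MvPolynomial (Fin 3) F) :=
  pderiv 0 f • pderiv 2 - pderiv 2 f • pderiv 0

lemma tD_apply (f g : MvPolynomial (Fin 3) F) :
    tD f g = pderiv 0 f * pderiv 2 g - pderiv 2 f * pderiv 0 g := by
  simp [tD]

noncomputable def H2 (f : MvPolynomial (Fin 3) F) : MvPolynomial (Fin 3) F :=
  pderiv 0 f * tD f (pderiv 2 f) - pderiv 2 f * tD f (pderiv 0 f)

noncomputable def tv (f : MvPolynomial (Fin 3) F) : Fin 3 → Polynomial (MvPolynomial (Fin 3) F) :=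
  ![Polynomial.C (X 0) - Polynomial.X * Polynomial.C (pderiv 2 f), Polynomial.C (X 1),
    Polynomial.C (X 2) + Polynomial.X * Polynomial.C (pderiv 0 f)]

lemma dh_C {R : Type*} [CommRing R] [Algebra F R] (D : Derivation F R R) (a : R) :
    dh D (Polynomial.C a) = Polynomial.C (D a) := by
  ext n; rw [coeff_dh, Polynomial.coeff_C, Polynomial.coeff_C]; split_ifs <;> simp

lemma dh_X {R : Type*} [CommRing R] [Algebra F R] (D : Derivation F R R) :
    dh D (Polynomial.X : Polynomial R) = 0 := by
  ext n; rw [coeff_dh, Polynomial.coeff_X]; split_ifs <;> simp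

lemma dh_sub {R : Type*} [CommRing R] [Algebra F R] (D : Derivation F R R)
    (p q : Polynomial R) : dh D (p - q) = dh D p - dh D q := by
  ext n; simp [coeff_dh]

lemma tangent_identity (f : MvPolynomial (Fin 3) F) :
    Polynomial.C (pderiv 0 f) * dh (tD f) (aeval (tv f) f) -
      (Polynomial.C (pderiv 0 f) + Polynomial.X * Polynomial.C (tD f (pderiv 0 f))) *
        Polynomial.derivative (aeval (tv f) f)
      = - Polynomial.C (H2 f) * (Polynomial.X * aeval (tv f) (pderiv 0 f)) := by
  rw [chain (dh (tD f)) (dh_add _) (dh_mul _)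
    (fun c => by
      rw [Polynomial.algebraMap_apply, dh_C, Derivation.map_algebraMap]; simp) (tv f) f]
  rw [chain (S := Polynomial (MvPolynomial (Fin 3) F))
    (fun p => Polynomial.derivative p) (fun a b => by simp)
    (fun a b => by rw [Polynomial.derivative_mul]; ring)
    (fun c => by
      rw [Polynomial.algebraMap_apply]; simp) (tv f) f]
  have t0 : tD f (X 0) = - pderiv 2 f := by simp [tD_apply, pderiv_X]
  have t1 : tD f (X 1) = 0 := by simp [tD_apply, pderiv_X]
  have t2 : tD f (X 2) = pderiv 0 f := by simp [tD_apply, pderiv_X]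
  simp only [tv, H2, Matrix.cons_val_zero, Matrix.cons_val_one, Matrix.cons_val, dh_sub, dh_add,
    dh_mul, dh_C, dh_X, t0, t1, t2, map_sub, map_mul, map_neg, Polynomial.derivative_mul,
    Polynomial.derivative_C, Polynomial.derivative_X, Polynomial.derivative_add,
    Polynomial.derivative_sub, map_zero]
  ring

lemma tD_self (f : MvPolynomial (Fin 3) F) : tD f f = 0 := by rw [tD_apply]; ring

lemma natDegree_tangent (f : MvPolynomial (Fin 3) F) :
    (aeval (tv f) f).natDegree ≤ f.totalDegree := by
  have key : ∀ i, (tv f i).natDegree ≤ 1 := ?_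
  · rw [aeval_def, eval₂_eq]
    refine Polynomial.natDegree_sum_le_of_forall_le _ _ fun d hd => ?_
    refine (Polynomial.natDegree_mul_le).trans ?_
    have h1 : (algebraMap F (Polynomial (MvPolynomial (Fin 3) F)) (coeff d f)).natDegree = 0 := by
      rw [Polynomial.algebraMap_apply]; simp
    rw [h1, zero_add]
    refine (Polynomial.natDegree_prod_le _ _).trans ?_
    refine le_trans (Finset.sum_le_sum fun i _ => (?_ : _ ≤ d i)) (le_totalDegree hd)
    refine Polynomial.natDegree_pow_le.trans ?_
    simpa using Nat.mul_le_mul_left (d i) (key i)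
  · intro i
    fin_cases i
    · simp only [tv]
      show (Polynomial.C (X 0) - Polynomial.X * Polynomial.C (pderiv 2 f)).natDegree ≤ 1
      compute_degree
    · show (Polynomial.C (X 1)).natDegree ≤ 1
      simp
    · show (Polynomial.C (X 2) + Polynomial.X * Polynomial.C (pderiv 0 f)).natDegree ≤ 1
      compute_degree

lemma tangent (f : MvPolynomial (Fin 3) F) (hf : Prime f) (hY : ¬ f ∣ pderiv 0 f)
    (hH : f ∣ H2 f) (hchar : ∀ n : ℕ, 0 < n → n ≤ f.totalDegree → (n : F) ≠ 0) (n : ℕ) :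
    f ∣ (aeval (tv f) f).coeff n := by
  induction n with
  | zero =>
    rw [Polynomial.coeff_zero_eq_eval_zero]
    have : Polynomial.eval 0 (aeval (tv f) f) = f := by
      rw [← Polynomial.coe_evalRingHom]
      have h2 := MvPolynomial.map_aeval (tv f) (Polynomial.evalRingHom (0 : MvPolynomial (Fin 3) F)) f
      rw [h2]
      conv_rhs => rw [← MvPolynomial.eval₂_eta f]
      rw [coe_eval₂Hom]
      congr 1
      · ext; simp [Polynomial.algebraMap_apply]
      · funext i; fin_cases i <;> simp [tv]
    rw [this]
  | succ n ih =>
    by_cases hn : f.totalDegree < n + 1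
    · rw [Polynomial.coeff_eq_zero_of_natDegree_lt ((natDegree_tangent f).trans_lt hn)]
      exact dvd_zero _
    have hdvd : f ∣ (Polynomial.C (pderiv 0 f) * dh (tD f) (aeval (tv f) f) -
      (Polynomial.C (pderiv 0 f) + Polynomial.X * Polynomial.C (tD f (pderiv 0 f))) *
        Polynomial.derivative (aeval (tv f) f)).coeff n := by
      rw [tangent_identity, ← map_neg, Polynomial.coeff_C_mul]
      exact Dvd.dvd.mul_right ((dvd_neg).mpr hH) _
    have hD : f ∣ tD f ((aeval (tv f) f).coeff n) := by
      obtain ⟨g, hg⟩ := ih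
      rw [hg, Derivation.leibniz, tD_self]
      simp
    rw [add_mul, mul_assoc, mul_comm Polynomial.X, mul_assoc, Polynomial.coeff_sub, Polynomial.coeff_add,
      Polynomial.coeff_C_mul,
      Polynomial.coeff_C_mul, Polynomial.coeff_C_mul, coeff_dh, Polynomial.coeff_derivative] at hdvd
    have h3 : f ∣ tD f (pderiv 0 f) * (Polynomial.X * Polynomial.derivative (aeval (tv f) f)).coeff n := by
      apply Dvd.dvd.mul_left
      cases n with
      | zero => simp
      | succ m =>
        rw [Polynomial.coeff_X_mul, Polynomial.coeff_derivative]
        exact Dvd.dvd.mul_right ih _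
    have h4 : f ∣ pderiv 0 f * ((aeval (tv f) f).coeff (n+1) * ((n : MvPolynomial (Fin 3) F) + 1)) := by
      have h5 := (dvd_sub (dvd_sub (Dvd.dvd.mul_left hD (pderiv 0 f)) hdvd) h3)
      convert h5 using 1
      ring
    have h6 := (hf.dvd_or_dvd h4).resolve_left hY
    have h7 : f ∣ (aeval (tv f) f).coeff (n+1) * C ((n+1 : ℕ) : F) := by
      convert h6 using 2
      simp
    have hu : IsUnit (C ((n+1 : ℕ) : F) : MvPolynomial (Fin 3) F) :=
      (IsUnit.mk0 _ (hchar (n+1) (by omega) (by omega))).map C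
    exact (hu.dvd_mul_right).mp h7

lemma tangent_C (f : MvPolynomial (Fin 3) F) (hf : Prime f) (hY : ¬ f ∣ pderiv 0 f)
    (hH : f ∣ H2 f) (hchar : ∀ n : ℕ, 0 < n → n ≤ f.totalDegree → (n : F) ≠ 0) :
    Polynomial.C f ∣ aeval (tv f) f := by
  rw [Polynomial.C_dvd_iff_dvd_coeff]
  exact tangent f hf hY hH hchar

end SP

namespace SP
open MvPolynomial
variable {F : Type*} [Field F]

lemma totalDegree_pderiv {n : ℕ} (i : Fin n) (f : MvPolynomial (Fin n) F) :
    (pderiv i f).totalDegree ≤ f.totalDegree - 1 := by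
  classical
  refine Finset.sup_le fun m hm => ?_
  rw [mem_support_iff, coeff_pderiv] at hm
  have h1 : m + Finsupp.single i 1 ∈ f.support := by
    rw [mem_support_iff]; intro h; rw [h] at hm; simp at hm
  have h2 := le_totalDegree h1
  rw [Finsupp.sum_add_index' (by simp) (by intros; rfl), Finsupp.sum_single_index rfl] at h2
  omega

lemma totalDegree_le_of_dvd {n : ℕ} (f g : MvPolynomial (Fin n) F) (h : f ∣ g) (hg : g ≠ 0) :
    f.totalDegree ≤ g.totalDegree := by
  obtain ⟨k, rfl⟩ := h
  rw [totalDegree_mul_of_isDomain (left_ne_zero_of_mul hg) (right_ne_zero_of_mul hg)]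
  omega

lemma not_dvd_pderiv (f : MvPolynomial (Fin 3) F) (hY : 0 < f.degreeOf 0)
    (hchar : ∀ n : ℕ, 0 < n → n ≤ f.totalDegree → (n : F) ≠ 0) : ¬ f ∣ pderiv 0 f := by
  classical
  intro h
  have hpos : 0 < f.totalDegree := hY.trans_le (degreeOf_le_totalDegree _ _)
  have hne : pderiv 0 f ≠ 0 := by
    intro h0
    rw [degreeOf_eq_sup] at hY
    obtain ⟨m, hm, hm0⟩ := (Finset.lt_sup_iff).mp hY
    have h1 : coeff (m - Finsupp.single 0 1) (pderiv 0 f) = 0 := by rw [h0]; simp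
    rw [coeff_pderiv] at h1
    have h2 : m - Finsupp.single 0 1 + Finsupp.single 0 1 = m := by
      apply tsub_add_cancel_of_le
      rw [Finsupp.single_le_iff]; exact hm0
    rw [h2] at h1
    have h3 : (m - Finsupp.single 0 1 : Fin 3 →₀ ℕ) 0 + 1 = m 0 := by
      simp; omega
    have h4 : m 0 ≤ f.totalDegree :=
      (monomial_le_degreeOf 0 hm).trans (degreeOf_le_totalDegree _ _)
    rcases mul_eq_zero.mp h1 with h5 | h5
    · exact (mem_support_iff.mp hm) h5
    · refine hchar (m 0) hm0 h4 ?_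
      rw [← h3]; exact_mod_cast h5
  have h1 := totalDegree_le_of_dvd _ _ h hne
  have h2 := totalDegree_pderiv 0 f
  omega

lemma totalDegree_H2 (f : MvPolynomial (Fin 3) F) : (H2 f).totalDegree ≤ 3 * f.totalDegree := by
  have hp : ∀ i g, (pderiv i g : MvPolynomial (Fin 3) F).totalDegree ≤ g.totalDegree := fun i g =>
    (totalDegree_pderiv i g).trans (by omega)
  have hD : ∀ g, (tD f g).totalDegree ≤ f.totalDegree + g.totalDegree := by
    intro g
    rw [tD_apply]
    refine (totalDegree_sub _ _).trans (max_le ?_ ?_)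
    · exact (totalDegree_mul _ _).trans (add_le_add (hp _ _) (hp _ _))
    · exact (totalDegree_mul _ _).trans (add_le_add (hp _ _) (hp _ _))
  rw [H2]
  refine (totalDegree_sub _ _).trans (max_le ?_ ?_)
  · refine (totalDegree_mul _ _).trans ?_
    have := hD (pderiv 2 f)
    have := hp 2 f
    have := hp 0 f
    omega
  · refine (totalDegree_mul _ _).trans ?_
    have := hD (pderiv 0 f)
    have := hp 2 f
    have := hp 0 f
    omega

lemma deriv_l2 (t : F × F × F) (f : MvPolynomial (Fin 3) F) :
    Polynomial.derivative (aeval (l2 t) f) =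
      Polynomial.C t.2.1 * aeval (l2 t) (pderiv 0 f) + aeval (l2 t) (pderiv 2 f) := by
  rw [chain (S := Polynomial F)
    (fun p => Polynomial.derivative p) (fun a b => by simp)
    (fun a b => by rw [Polynomial.derivative_mul]; ring)
    (fun c => by simp) (l2 t) f]
  simp [l2]
  ring

lemma H2_line (t : F × F × F) (f : MvPolynomial (Fin 3) F) (h : aeval (l2 t) f = 0) :
    aeval (l2 t) (H2 f) = 0 := by
  have h1 := deriv_l2 t f
  rw [h, Polynomial.derivative_zero] at h1
  have hZ : aeval (l2 t) (pderiv 2 f) = - (Polynomial.C t.2.1 * aeval (l2 t) (pderiv 0 f)) :=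
    by linear_combination -h1
  have h2 := deriv_l2 t (pderiv 2 f)
  have h3 := deriv_l2 t (pderiv 0 f)
  rw [hZ, Polynomial.derivative_neg, Polynomial.derivative_mul, Polynomial.derivative_C, h3] at h2
  simp only [H2, tD_apply, map_sub, map_mul, hZ]
  linear_combination (-(aeval (l2 t) (pderiv 0 f))^2) * h2

lemma aeval_two_injective :
    Function.Injective (aeval (R := F)
      (![Polynomial.C Polynomial.X, Polynomial.X] : Fin 2 → Polynomial (Polynomial F))) := by
  apply Function.LeftInverse.injective
    (g := Polynomial.eval₂RingHom
      (Polynomial.aeval (X 0 : MvPolynomial (Fin 2) F)).toRingHom (X 1 : MvPolynomial (Fin 2) F))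
  intro r
  induction r using MvPolynomial.induction_on with
  | C a =>
    rw [algHom_C, Polynomial.algebraMap_apply, Polynomial.coe_eval₂RingHom,
      Polynomial.eval₂_C]
    simp [algebraMap_eq]
  | add p q hp hq => rw [map_add, map_add, hp, hq]
  | mul_X p i hp =>
    rw [map_mul, map_mul, hp]
    congr 1
    fin_cases i <;> simp

lemma two_inj (r : MvPolynomial (Fin 2) F) (q : Polynomial F) (hq : q ≠ 0) (x : F)
    (h : aeval (![Polynomial.C Polynomial.X,
      Polynomial.C (Polynomial.C x) + Polynomial.X * Polynomial.C q] :
        Fin 2 → Polynomial (Polynomial F)) r = 0) : r = 0 := by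
  have h1 : aeval (![Polynomial.C Polynomial.X,
      Polynomial.C (Polynomial.C x) + Polynomial.X * Polynomial.C q] :
        Fin 2 → Polynomial (Polynomial F)) r =
      (aeval (R := F)
      (![Polynomial.C Polynomial.X, Polynomial.X] : Fin 2 → Polynomial (Polynomial F)) r).comp
      (Polynomial.C (Polynomial.C x) + Polynomial.X * Polynomial.C q) := by
    clear h
    induction r using MvPolynomial.induction_on with
    | C a =>
      simp [algHom_C, Polynomial.algebraMap_apply]
    | add p q hp hq => rw [map_add, map_add, hp, hq, Polynomial.add_comp]
    | mul_X p i hp =>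
      rw [map_mul, map_mul, hp, Polynomial.mul_comp]
      congr 1
      fin_cases i <;> simp
  rw [h1, Polynomial.comp_eq_zero_iff] at h
  rcases h with h | ⟨-, h⟩
  · exact (map_eq_zero_iff _ aeval_two_injective).mp h
  · exfalso
    have := congrArg (fun p => Polynomial.coeff p 1) h
    simp [Polynomial.coeff_C] at this
    exact hq this

/-- the tangent plane polynomial -/
noncomputable def tp (f : MvPolynomial (Fin 3) F) (s : F × F × F) : MvPolynomial (Fin 3) F :=
  Polynomial.aeval (X 1) (aeval (l1 s) (pderiv 0 f)) * (X 0 - (C s.2.1 * X 1 + C s.2.2)) +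
  Polynomial.aeval (X 1) (aeval (l1 s) (pderiv 2 f)) * (X 2 - C s.1)

lemma aeval_l1_W (s : F × F × F) (q : Polynomial F) :
    aeval (l1 s) (Polynomial.aeval (X 1 : MvPolynomial (Fin 3) F) q) = q := by
  rw [← Polynomial.aeval_algHom_apply]
  simp [l1]

lemma dvd_tp (f : MvPolynomial (Fin 3) F) (hf : Prime f) (hY0 : 0 < f.degreeOf 0)
    (hH : f ∣ H2 f) (hchar : ∀ n : ℕ, 0 < n → n ≤ f.totalDegree → (n : F) ≠ 0)
    (s : F × F × F) (hs : aeval (l1 s) f = 0) (hq : aeval (l1 s) (pderiv 0 f) ≠ 0) :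
    f ∣ tp f s := by
  by_contra hcon
  obtain ⟨r, u, v, hr, -, huv⟩ := elim f (tp f s) hf hY0 hcon
  obtain ⟨k, hk⟩ := tangent_C f hf (not_dvd_pderiv f hY0 hchar) hH hchar
  set q := aeval (l1 s) (pderiv 0 f) with hqdef
  set w := aeval (l1 s) (pderiv 2 f) with hwdef
  set v1 : Fin 3 → Polynomial (Polynomial F) :=
    ![Polynomial.C (Polynomial.C s.2.1 * Polynomial.X + Polynomial.C s.2.2)
        - Polynomial.X * Polynomial.C w, Polynomial.C Polynomial.X,
      Polynomial.C (Polynomial.C s.1) + Polynomial.X * Polynomial.C q] with hv1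
  have hf0 : aeval v1 f = 0 := by
    have h1 := congrArg (Polynomial.map (aeval (l1 s)).toRingHom) hk
    rw [Polynomial.map_mul, Polynomial.map_C] at h1
    have h2 : (aeval (l1 s)).toRingHom f = 0 := hs
    rw [h2, map_zero, zero_mul] at h1
    rw [← h1]
    have h3 := MvPolynomial.map_aeval (tv f) (Polynomial.mapRingHom (aeval (l1 s)).toRingHom) f
    rw [Polynomial.coe_mapRingHom] at h3
    rw [h3, aeval_def, coe_eval₂Hom]
    congr 1
    · ext a : 1
      simp [Polynomial.algebraMap_apply]
    · have hw' : (aeval (l1 s)).toRingHom (pderiv 2 f) = w := rfl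
      have hq' : (aeval (l1 s)).toRingHom (pderiv 0 f) = q := rfl
      have hX' : ∀ i, (aeval (R := F) (l1 s)).toRingHom (X i : MvPolynomial (Fin 3) F) = l1 s i := fun i => aeval_X _ _
      funext i
      fin_cases i
      · show _ = Polynomial.map _ (Polynomial.C (X 0) - Polynomial.X * Polynomial.C (pderiv 2 f))
        rw [Polynomial.map_sub, Polynomial.map_mul, Polynomial.map_C, Polynomial.map_C, hw', hX',
          Polynomial.map_X]
        rfl
      · show _ = Polynomial.map _ (Polynomial.C (X 1))
        rw [Polynomial.map_C, hX']
        rfl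
      · show _ = Polynomial.map _ (Polynomial.C (X 2) + Polynomial.X * Polynomial.C (pderiv 0 f))
        rw [Polynomial.map_add, Polynomial.map_mul, Polynomial.map_C, Polynomial.map_C, hq', hX',
          Polynomial.map_X]
        rfl
  have hW : ∀ g : Polynomial F, aeval v1 (Polynomial.aeval (X 1 : MvPolynomial (Fin 3) F) g) =
      Polynomial.C g := by
    intro g
    rw [← Polynomial.aeval_algHom_apply, aeval_X]
    show Polynomial.aeval (Polynomial.C Polynomial.X) g = _
    induction g using Polynomial.induction_on' with
    | add p q hp hq => simp [hp, hq]
    | monomial n a => 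
      rw [Polynomial.aeval_monomial, Polynomial.algebraMap_apply, ← Polynomial.C_pow,
        ← Polynomial.C_mul, Polynomial.algebraMap_eq, Polynomial.C_mul_X_pow_eq_monomial]
  have hg0 : aeval v1 (tp f s) = 0 := by
    simp only [tp, ← hqdef, ← hwdef, map_add, map_mul, hW, map_sub, aeval_X, algHom_C,
      Polynomial.algebraMap_apply, Polynomial.algebraMap_eq]
    simp only [hv1, Matrix.cons_val_zero, Matrix.cons_val_one, Matrix.cons_val, map_add, map_mul]
    ring
  have := congrArg (aeval v1) huv
  rw [map_add, map_mul, map_mul, hf0, hg0, zero_mul, zero_mul, add_zero, aeval_rename] at this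
  refine hr (two_inj r q hq s.1 ?_)
  rw [this]
  congr 2

/-- collinearity of three parameters, relative to two base points -/
def col (s s' s'' : F × F × F) : Prop :=
  (s''.2.1 - s.2.1) * (s'.1 - s.1) = (s'.2.1 - s.2.1) * (s''.1 - s.1) ∧
  (s''.2.2 - s.2.2) * (s'.1 - s.1) = (s'.2.2 - s.2.2) * (s''.1 - s.1)

lemma planar (f : MvPolynomial (Fin 3) F) (hf : Prime f) (hY0 : 0 < f.degreeOf 0)
    (hH : f ∣ H2 f) (hchar : ∀ n : ℕ, 0 < n → n ≤ f.totalDegree → (n : F) ≠ 0)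
    (s s' s'' : F × F × F) (hs : aeval (l1 s) f = 0) (hq : aeval (l1 s) (pderiv 0 f) ≠ 0)
    (hs' : aeval (l1 s') f = 0) (hs'' : aeval (l1 s'') f = 0) :
    col s s' s'' := by
  have hd := dvd_tp f hf hY0 hH hchar s hs hq
  set q := aeval (l1 s) (pderiv 0 f) with hqdef
  set w := aeval (l1 s) (pderiv 2 f) with hwdef
  have ev : ∀ t : F × F × F, aeval (l1 t) (tp f s) =
      q * ((Polynomial.C t.2.1 * Polynomial.X + Polynomial.C t.2.2) -
        (Polynomial.C s.2.1 * Polynomial.X + Polynomial.C s.2.2)) +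
      w * (Polynomial.C t.1 - Polynomial.C s.1) := by
    intro t
    simp only [tp, ← hqdef, ← hwdef, map_add, map_mul, aeval_l1_W, map_sub, aeval_X, algHom_C,
      Polynomial.algebraMap_eq]
    simp [l1]
  have h1 : aeval (l1 s') (tp f s) = 0 := by
    obtain ⟨k, hk⟩ := hd; rw [hk, map_mul, hs', zero_mul]
  rw [ev] at h1
  set B : MvPolynomial (Fin 3) F := C (s'.1 - s.1) * (X 0 - (C s.2.1 * X 1 + C s.2.2)) -
    ((C s'.2.1 * X 1 + C s'.2.2) - (C s.2.1 * X 1 + C s.2.2)) * (X 2 - C s.1) with hB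
  have h2 : C (s'.1 - s.1) * tp f s = Polynomial.aeval (X 1) q * B := by
    have h3 := congrArg (Polynomial.aeval (X 1 : MvPolynomial (Fin 3) F)) h1
    simp only [map_add, map_mul, map_sub, Polynomial.aeval_X, Polynomial.aeval_C, map_zero,
      algebraMap_eq] at h3
    simp only [tp, ← hqdef, ← hwdef, hB, map_sub]
    linear_combination (X 2 - C s.1) * h3
  have h3 : f ∣ Polynomial.aeval (X 1) q * B := by rw [← h2]; exact Dvd.dvd.mul_left hd _
  have h4 : f ∣ B := by
    refine (hf.dvd_or_dvd h3).resolve_left ?_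
    rintro ⟨k, hk⟩
    have := congrArg (aeval (l1 s)) hk
    rw [aeval_l1_W, map_mul, hs, zero_mul] at this
    exact hq this
  have h5 : aeval (l1 s'') B = 0 := by
    obtain ⟨k, hk⟩ := h4; rw [hk, map_mul, hs'', zero_mul]
  simp only [hB, map_sub, map_mul, map_add, aeval_X, algHom_C, Polynomial.algebraMap_eq] at h5
  simp only [l1, Matrix.cons_val_zero, Matrix.cons_val_one, Matrix.cons_val] at h5
  have c0 := congrArg (fun p => Polynomial.coeff p 0) h5
  have c1 := congrArg (fun p => Polynomial.coeff p 1) h5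
  simp only [← map_sub, Polynomial.coeff_sub, Polynomial.coeff_C_mul,
    Polynomial.coeff_mul_C, Polynomial.coeff_add, Polynomial.coeff_X_zero, Polynomial.coeff_X_one,
    Polynomial.coeff_C_zero, Polynomial.coeff_C_succ, Polynomial.coeff_zero] at c0 c1
  constructor
  · linear_combination c1
  · linear_combination c0

end SP

namespace SP
open MvPolynomial
variable {F : Type*} [Field F]

/-- incidence -/
def inc (s t : F × F × F) : Prop := s.2.1 * t.1 + s.2.2 = t.2.1 * s.1 + t.2.2

lemma inc_symm {s t : F × F × F} : inc s t ↔ inc t s := by unfold inc; exact eq_comm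

lemma eval_l1 (s : F × F × F) (w : F) (f : MvPolynomial (Fin 3) F) :
    (aeval (l1 s) f).eval w = eval ![s.2.1 * w + s.2.2, w, s.1] f := by
  induction f using MvPolynomial.induction_on with
  | C a => simp
  | add p q hp hq => simp [hp, hq]
  | mul_X p i hp =>
    rw [map_mul, map_mul, Polynomial.eval_mul, hp]
    congr 1
    fin_cases i <;> simp [l1]

lemma eval_l2 (s : F × F × F) (w : F) (f : MvPolynomial (Fin 3) F) :
    (aeval (l2 s) f).eval w = eval ![s.2.1 * w + s.2.2, s.1, w] f := by
  induction f using MvPolynomial.induction_on with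
  | C a => simp
  | add p q hp hq => simp [hp, hq]
  | mul_X p i hp =>
    rw [map_mul, map_mul, Polynomial.eval_mul, hp]
    congr 1
    fin_cases i <;> simp [l2]

lemma eval_inc {s t : F × F × F} (h : inc s t) (f : MvPolynomial (Fin 3) F) :
    (aeval (l1 s) f).eval t.1 = (aeval (l2 t) f).eval s.1 := by
  rw [eval_l1, eval_l2]
  unfold inc at h
  rw [h]

lemma natDegree_l1 (s : F × F × F) (f : MvPolynomial (Fin 3) F) :
    (aeval (l1 s) f).natDegree ≤ f.totalDegree := by
  have := MvPolynomial.aeval_natDegree_le (m := f.totalDegree) (n := 1) f le_rfl (l1 s) ?_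
  · simpa using this
  · intro i
    fin_cases i
    · show (Polynomial.C s.2.1 * Polynomial.X + Polynomial.C s.2.2).natDegree ≤ 1
      compute_degree
    · show (Polynomial.X).natDegree ≤ 1
      simp
    · show (Polynomial.C s.1).natDegree ≤ 1
      simp

lemma natDegree_l2 (s : F × F × F) (f : MvPolynomial (Fin 3) F) :
    (aeval (l2 s) f).natDegree ≤ f.totalDegree := by
  have := MvPolynomial.aeval_natDegree_le (m := f.totalDegree) (n := 1) f le_rfl (l2 s) ?_
  · simpa using this
  · intro i
    fin_cases i
    · show (Polynomial.C s.2.1 * Polynomial.X + Polynomial.C s.2.2).natDegree ≤ 1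
      compute_degree
    · show (Polynomial.C s.1).natDegree ≤ 1
      simp
    · show (Polynomial.X).natDegree ≤ 1
      simp

lemma card_roots_inj (q : Polynomial F) (hq : q ≠ 0) (T : Finset (F × F × F))
    (hT : Set.InjOn Prod.fst (T : Set (F × F × F))) (h : ∀ t ∈ T, q.eval t.1 = 0) :
    T.card ≤ q.natDegree := by
  classical
  rw [← Finset.card_image_of_injOn hT]
  refine le_trans (Finset.card_le_card ?_)
    ((Multiset.toFinset_card_le q.roots).trans (Polynomial.card_roots' q))
  intro x hx
  obtain ⟨t, ht, rfl⟩ := Finset.mem_image.mp hx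
  rw [Multiset.mem_toFinset, Polynomial.mem_roots hq]
  exact h t ht

open scoped Classical in
/-- number of incidences -/
noncomputable def I (S T : Finset (F × F × F)) : ℕ := ∑ t ∈ T, (S.filter (fun s => inc s t)).card

open scoped Classical in
lemma prime_case (f : MvPolynomial (Fin 3) F) (hf : Prime f)
    (hchar : ∀ n : ℕ, 0 < n → n ≤ f.totalDegree → (n : F) ≠ 0)
    (S T : Finset (F × F × F)) (hS : Set.InjOn Prod.fst (S : Set (F × F × F)))
    (hT : Set.InjOn Prod.fst (T : Set (F × F × F))) (k : ℕ)
    (hk : ∀ s ∈ S, ∀ s' ∈ S, s ≠ s' → (S.filter (fun s'' => col s s' s'')).card ≤ k)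
    (hTf : ∀ t ∈ T, aeval (l2 t) f = 0) :
    ∃ T' ⊆ T, (T \ T').card ≤ 20 * f.totalDegree ^ 2 ∧
      I S T' ≤ f.totalDegree * S.card + T'.card * (f.totalDegree + k + 1) := by
  set d := f.totalDegree with hd
  rcases Nat.eq_zero_or_pos (f.degreeOf 0) with h0 | hY
  · refine ⟨∅, by simp, ?_, by simp [I]⟩
    have := noY_lines f hf.ne_zero h0 T hT hTf
    simp only [Finset.sdiff_empty]
    rw [← hd] at this
    nlinarith
  by_cases hH : f ∣ H2 f
  swap
  · refine ⟨∅, by simp, ?_, by simp [I]⟩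
    have := bezout_lines f (H2 f) hf hY hH T hT hTf (fun t ht => H2_line t f (hTf t ht))
    simp only [Finset.sdiff_empty]
    have h2 := totalDegree_H2 f
    have h3 : (f.totalDegree + (H2 f).totalDegree) ^ 2 ≤ (4 * d) ^ 2 :=
      Nat.pow_le_pow_left (by omega) 2
    nlinarith
  have hYd := not_dvd_pderiv f hY hchar
  refine ⟨T.filter (fun t => aeval (l2 t) (pderiv 0 f) ≠ 0), Finset.filter_subset _ _, ?_, ?_⟩
  · have hsub : T \ T.filter (fun t => aeval (l2 t) (pderiv 0 f) ≠ 0) ⊆ T := Finset.sdiff_subset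
    have := bezout_lines f (pderiv 0 f) hf hY hYd _
      (hT.mono (Finset.coe_subset.mpr hsub)) (fun t ht => hTf t (hsub ht)) (by
        intro t ht
        simp only [Finset.mem_sdiff, Finset.mem_filter, not_and, not_not] at ht
        exact ht.2 ht.1)
    have h2 := totalDegree_pderiv 0 f
    have h3 : (f.totalDegree + (pderiv 0 f).totalDegree) ^ 2 ≤ (2 * d) ^ 2 :=
      Nat.pow_le_pow_left (by omega) 2
    nlinarith
  set T' := T.filter (fun t => aeval (l2 t) (pderiv 0 f) ≠ 0) with hT'
  have hT'i : Set.InjOn Prod.fst (T' : Set (F × F × F)) :=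
    hT.mono (Finset.coe_subset.mpr (Finset.filter_subset _ _))
  have hsplit : ∀ t ∈ T', (S.filter (fun s => inc s t)).card ≤
      ((S.filter (fun s => aeval (l1 s) f ≠ 0)).filter (fun s => inc s t)).card + (d + k + 1) := by
    intro t ht
    have htT : t ∈ T := (Finset.mem_filter.mp ht).1
    have htY : aeval (l2 t) (pderiv 0 f) ≠ 0 := (Finset.mem_filter.mp ht).2
    set B1 := S.filter (fun s => (aeval (l2 t) (pderiv 0 f)).eval s.1 = 0)
    set B2 := S.filter (fun s => inc s t ∧ aeval (l1 s) f = 0 ∧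
      (aeval (l2 t) (pderiv 0 f)).eval s.1 ≠ 0)
    have hsub : S.filter (fun s => inc s t) ⊆
        (S.filter (fun s => aeval (l1 s) f ≠ 0)).filter (fun s => inc s t) ∪ (B1 ∪ B2) := by
      intro s hs
      simp only [Finset.mem_union, Finset.mem_filter, B1, B2] at hs ⊢
      tauto
    have hB1 : B1.card ≤ d := by
      refine (card_roots_inj _ htY B1 (hS.mono (Finset.coe_subset.mpr (Finset.filter_subset _ _)))
        ?_).trans ((natDegree_l2 _ _).trans ((totalDegree_pderiv _ _).trans (by omega)))
      intro s hs; exact (Finset.mem_filter.mp hs).2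
    have hB2 : B2.card ≤ k + 1 := by
      by_cases h1 : B2.card ≤ 1
      · omega
      obtain ⟨s, hs, s', hs', hne⟩ := Finset.one_lt_card.mp (not_le.mp h1)
      have hs1 := Finset.mem_filter.mp hs
      have hs1' := Finset.mem_filter.mp hs'
      refine le_trans (le_trans (Finset.card_le_card ?_) (hk s hs1.1 s' hs1'.1 hne)) (by omega)
      intro s'' hs''
      have hs2 := Finset.mem_filter.mp hs''
      refine Finset.mem_filter.mpr ⟨hs2.1, ?_⟩
      refine planar f hf hY hH hchar s s' s'' hs1.2.2.1 ?_ hs1'.2.2.1 hs2.2.2.1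
      intro h
      have := eval_inc hs1.2.1 (pderiv 0 f)
      rw [h] at this
      exact hs1.2.2.2 (by rw [← this]; simp)
    have h5 := Finset.card_le_card hsub
    have h6 := Finset.card_union_le ((S.filter (fun s => aeval (l1 s) f ≠ 0)).filter
      (fun s => inc s t)) (B1 ∪ B2)
    have h7 := Finset.card_union_le B1 B2
    omega
  unfold I
  refine (Finset.sum_le_sum hsplit).trans ?_
  rw [Finset.sum_add_distrib, Finset.sum_const, smul_eq_mul]
  refine Nat.add_le_add_right ?_ _
  have hcomm := Finset.sum_card_bipartiteAbove_eq_sum_card_bipartiteBelow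
    (s := S.filter (fun s => aeval (l1 s) f ≠ 0)) (t := T') (fun s t => inc s t)
  unfold Finset.bipartiteAbove Finset.bipartiteBelow at hcomm
  rw [← hcomm]
  calc ∑ s ∈ S.filter (fun s => aeval (l1 s) f ≠ 0), (T'.filter (fun t => inc s t)).card
      ≤ ∑ s ∈ S.filter (fun s => aeval (l1 s) f ≠ 0), d := by
        refine Finset.sum_le_sum fun s hs => ?_
        have hs1 := (Finset.mem_filter.mp hs).2
        refine (card_roots_inj _ hs1 _ (hT'i.mono (Finset.coe_subset.mpr
          (Finset.filter_subset _ _))) ?_).trans (natDegree_l1 _ _)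
        intro t ht
        have ht1 := Finset.mem_filter.mp ht
        rw [eval_inc ht1.2, hTf t (Finset.mem_filter.mp ht1.1).1]
        simp
    _ = (S.filter (fun s => aeval (l1 s) f ≠ 0)).card * d := by simp
    _ ≤ d * S.card := by
        rw [mul_comm]; exact Nat.mul_le_mul_left _ (Finset.card_filter_le _ _)

open scoped Classical in
lemma I_union_le (S T T' : Finset (F × F × F)) : I S (T ∪ T') ≤ I S T + I S T' := by
  unfold I
  rw [← Finset.sum_union_inter]
  exact Nat.le_add_right _ _

open scoped Classical in
lemma general_case (f : MvPolynomial (Fin 3) F) (S : Finset (F × F × F))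
    (hS : Set.InjOn Prod.fst (S : Set (F × F × F))) (k : ℕ)
    (hk : ∀ s ∈ S, ∀ s' ∈ S, s ≠ s' → (S.filter (fun s'' => col s s' s'')).card ≤ k) :
    f ≠ 0 →
    (∀ n : ℕ, 0 < n → n ≤ f.totalDegree → (n : F) ≠ 0) →
    ∀ T : Finset (F × F × F),
    Set.InjOn Prod.fst (T : Set (F × F × F)) →
    (∀ t ∈ T, aeval (l2 t) f = 0) →
    ∃ T' ⊆ T, (T \ T').card ≤ 20 * f.totalDegree ^ 2 ∧
      I S T' ≤ f.totalDegree * S.card + T'.card * (f.totalDegree + k + 1) := by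
  induction f using UniqueFactorizationMonoid.induction_on_prime with
  | h₁ => intro h; exact absurd rfl h
  | h₂ f hu =>
    intro _ _ T _ hTf
    have : T = ∅ := by
      rw [Finset.eq_empty_iff_forall_notMem]
      intro t ht
      exact (hu.map (aeval (l2 t))).ne_zero (hTf t ht)
    refine ⟨∅, by simp, by simp [this], by simp [I]⟩
  | h₃ f q hf0 hq ih =>
    intro _ hchar T hT hTf
    have hdeg : (q * f).totalDegree = q.totalDegree + f.totalDegree :=
      totalDegree_mul_of_isDomain hq.ne_zero hf0
    rw [hdeg] at hchar ⊢
    set T1 := T.filter (fun t => aeval (l2 t) q = 0) with hT1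
    set T2 := T.filter (fun t => aeval (l2 t) f = 0) with hT2
    have hs1 : T1 ⊆ T := Finset.filter_subset _ _
    have hs2 : T2 ⊆ T := Finset.filter_subset _ _
    obtain ⟨U1, hU1, hb1, hi1⟩ := prime_case q hq (fun n h0 h1 => hchar n h0 (by omega)) S T1 hS
      (hT.mono (Finset.coe_subset.mpr hs1)) k hk (fun t ht => (Finset.mem_filter.mp ht).2)
    obtain ⟨U2, hU2, hb2, hi2⟩ := ih hf0 (fun n h0 h1 => hchar n h0 (by omega)) (T2 \ U1)
      (hT.mono (Finset.coe_subset.mpr (Finset.sdiff_subset.trans hs2)))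
      (fun t ht => (Finset.mem_filter.mp (Finset.mem_sdiff.mp ht).1).2)
    refine ⟨U1 ∪ U2, ?_, ?_, ?_⟩
    · exact Finset.union_subset (hU1.trans hs1) (hU2.trans (Finset.sdiff_subset.trans hs2))
    · have hsub : T \ (U1 ∪ U2) ⊆ (T1 \ U1) ∪ ((T2 \ U1) \ U2) := by
        intro t ht
        simp only [Finset.mem_sdiff, Finset.mem_union, not_or, hT1, hT2, Finset.mem_filter] at ht ⊢
        have := hTf t ht.1
        rw [map_mul, mul_eq_zero] at this
        tauto
      have h5 := (Finset.card_le_card hsub).trans (Finset.card_union_le _ _)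
      nlinarith
    · have hc : (U1 ∪ U2).card = U1.card + U2.card := by
        apply Finset.card_union_of_disjoint
        rw [Finset.disjoint_left]
        intro t h1 h2
        exact (Finset.mem_sdiff.mp (hU2 h2)).2 h1
      rw [hc]
      refine (I_union_le _ _ _).trans ?_
      nlinarith [Nat.zero_le (U1.card * f.totalDegree), Nat.zero_le (U2.card * q.totalDegree)]

end SP

namespace SP
open MvPolynomial
variable {F : Type*} [Field F]

/-- exponent vector of a box point -/
noncomputable def emb {e : ℕ} (m : Fin 3 → Fin (e+1)) : Fin 3 →₀ ℕ :=
  Finsupp.equivFunOnFinite.symm (fun i => (m i : ℕ))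

lemma emb_inj {e : ℕ} : Function.Injective (emb (e := e)) := by
  intro a b h
  have := Finsupp.equivFunOnFinite.symm.injective h
  funext i
  exact Fin.ext (congrFun this i)

/-- polynomial from its box coefficients -/
noncomputable def boxP (e : ℕ) : ((Fin 3 → Fin (e+1)) → F) →ₗ[F] MvPolynomial (Fin 3) F :=
  ∑ m, (monomial (emb m)) ∘ₗ (LinearMap.proj m)

lemma boxP_apply (e : ℕ) (c : (Fin 3 → Fin (e+1)) → F) :
    boxP e c = ∑ m, monomial (emb m) (c m) := by
  simp [boxP]

lemma boxP_coeff (e : ℕ) (c : (Fin 3 → Fin (e+1)) → F) (m) : coeff (emb m) (boxP e c) = c m := by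
  classical
  rw [boxP_apply, coeff_sum]
  simp only [coeff_monomial, emb_inj.eq_iff]
  simp

lemma boxP_deg (e : ℕ) (c : (Fin 3 → Fin (e+1)) → F) : (boxP e c).totalDegree ≤ 3 * e := by
  rw [boxP_apply]
  refine totalDegree_finsetSum_le fun m _ => ?_
  refine (totalDegree_monomial_le _ _).trans ?_
  rw [Finsupp.sum_fintype _ _ (fun _ => rfl), Fin.sum_univ_three]
  simp only [emb, Finsupp.equivFunOnFinite_symm_apply_apply, id]
  omega

lemma params (S : Finset (F × F × F)) (e : ℕ) (h : S.card * (3 * e + 1) < (e + 1) ^ 3) :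
    ∃ f : MvPolynomial (Fin 3) F, f ≠ 0 ∧ f.totalDegree ≤ 3 * e ∧ ∀ s ∈ S, aeval (l1 s) f = 0 := by
  let L : ((Fin 3 → Fin (e+1)) → F) →ₗ[F] (S × Fin (3 * e + 1) → F) :=
    LinearMap.pi fun sj => (Polynomial.lcoeff F (sj.2 : ℕ)) ∘ₗ
      (aeval (l1 (sj.1 : F × F × F))).toLinearMap ∘ₗ boxP e
  have hL : LinearMap.ker L ≠ ⊥ := by
    apply LinearMap.ker_ne_bot_of_finrank_lt
    rw [Module.finrank_fintype_fun_eq_card, Module.finrank_fintype_fun_eq_card]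
    simpa using h
  obtain ⟨c, hc, hc0⟩ := Submodule.exists_mem_ne_zero_of_ne_bot hL
  refine ⟨boxP e c, ?_, boxP_deg e c, ?_⟩
  · intro h0
    apply hc0
    funext m
    rw [← boxP_coeff e c m, h0]; simp
  · intro s hs
    ext j
    rw [Polynomial.coeff_zero]
    by_cases hj : j < 3 * e + 1
    · have := congrFun (LinearMap.mem_ker.mp hc) (⟨s, hs⟩, ⟨j, hj⟩)
      simpa [L] using this
    · apply Polynomial.coeff_eq_zero_of_natDegree_lt
      have := natDegree_l1 s (boxP e c)
      have := boxP_deg e c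
      omega

open scoped Classical in
lemma greedy {α β : Type*} (r : α → β → Prop) (S : Finset α) (T : Finset β) (Q m : ℕ)
    (hQ : 0 < Q) (hm : 2 * m ≤ Q) (hT : ∀ t ∈ T, Q ≤ (S.filter (fun s => r s t)).card) :
    ∃ S' ⊆ S, ∃ T' ⊆ T, T.card ≤ 2 * T'.card ∧
      (∀ t ∈ T', m ≤ (S'.filter (fun s => r s t)).card) ∧ S'.card * Q ≤ 4 * m * S.card := by
  rcases T.eq_empty_or_nonempty with rfl | hTne
  · exact ⟨∅, by simp, ∅, by simp, by simp, by simp, by simp⟩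
  have hT0 : 0 < T.card := hTne.card_pos
  set Φ : Finset α → ℕ := fun U => ∑ t ∈ T, min m (U.filter (fun s => r s t)).card with hΦ
  obtain ⟨U, hU, hmax⟩ := Finset.exists_max_image
    (S.powerset.filter (fun U => U.card * (T.card * Q) ≤ 4 * S.card * Φ U)) Finset.card
    ⟨∅, by simp⟩
  rw [Finset.mem_filter, Finset.mem_powerset] at hU
  obtain ⟨hUS, hU2⟩ := hU
  have hΦle : Φ U ≤ m * T.card := by
    calc Φ U ≤ ∑ t ∈ T, m := Finset.sum_le_sum fun t _ => min_le_left _ _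
      _ = m * T.card := by simp [mul_comm]
  refine ⟨U, hUS, T.filter (fun t => m ≤ (U.filter (fun s => r s t)).card),
    Finset.filter_subset _ _, ?_, fun t ht => (Finset.mem_filter.mp ht).2, ?_⟩
  swap
  · have : T.card * (U.card * Q) ≤ T.card * (4 * m * S.card) := by
      have := Nat.mul_le_mul_left (4 * S.card) hΦle
      nlinarith
    exact Nat.le_of_mul_le_mul_left this hT0
  by_contra hlt
  push Not at hlt
  set N := T.filter (fun t => ¬ m ≤ (U.filter (fun s => r s t)).card) with hN
  have hNT : (T.filter (fun t => m ≤ (U.filter (fun s => r s t)).card)).card + N.card = T.card :=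
    Finset.card_filter_add_card_filter_not _
  have hS0 : 0 < S.card := by
    obtain ⟨t, ht⟩ := hTne
    have := hT t ht
    have := Finset.card_filter_le S (fun s => r s t)
    omega
  have hdc := Finset.sum_card_bipartiteAbove_eq_sum_card_bipartiteBelow
    (s := S \ U) (t := N) (fun s t => r s t)
  unfold Finset.bipartiteAbove Finset.bipartiteBelow at hdc
  have hlow : N.card * (Q - m) ≤ ∑ t ∈ N, ((S \ U).filter (fun s => r s t)).card := by
    rw [← smul_eq_mul]
    refine Finset.card_nsmul_le_sum _ _ _ fun t ht => ?_
    have ht1 := Finset.mem_filter.mp ht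
    have h1 := hT t ht1.1
    have h2 : S.filter (fun s => r s t) ⊆ (S \ U).filter (fun s => r s t) ∪
        U.filter (fun s => r s t) := by
      intro s hs
      simp only [Finset.mem_union, Finset.mem_filter, Finset.mem_sdiff] at hs ⊢
      tauto
    have h3 := (Finset.card_le_card h2).trans (Finset.card_union_le _ _)
    omega
  have hex : ∃ s ∈ S \ U, T.card * Q ≤ 4 * S.card * (N.filter (fun t => r s t)).card := by
    by_contra hno
    push Not at hno
    have h1 : ∑ s ∈ S \ U, 4 * S.card * (N.filter (fun t => r s t)).card ≤
        ∑ s ∈ S \ U, T.card * Q := Finset.sum_le_sum fun s hs => (hno s hs).le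
    rw [← Finset.mul_sum, Finset.sum_const, smul_eq_mul, hdc] at h1
    have h2 : (S \ U).card ≤ S.card := Finset.card_le_card Finset.sdiff_subset
    have h3 : 4 * S.card * (N.card * (Q - m)) ≤ S.card * (T.card * Q) :=
      (Nat.mul_le_mul_left _ hlow).trans (h1.trans (Nat.mul_le_mul_right _ h2))
    have h4 : 4 * (N.card * (Q - m)) ≤ T.card * Q := by
      apply Nat.le_of_mul_le_mul_left _ hS0
      calc _ = 4 * S.card * (N.card * (Q - m)) := by ring
        _ ≤ _ := h3
    have h5 : Q ≤ 2 * (Q - m) := by omega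
    have h6 : N.card * Q ≤ N.card * (2 * (Q - m)) := Nat.mul_le_mul_left _ h5
    have h7 : T.card < 2 * N.card := by omega
    nlinarith
  obtain ⟨s, hs, hsc⟩ := hex
  have hsU := (Finset.mem_sdiff.mp hs).2
  have hsS := (Finset.mem_sdiff.mp hs).1
  have hinc : Φ U + (N.filter (fun t => r s t)).card ≤ Φ (insert s U) := by
    have h1 : (N.filter (fun t => r s t)).card =
        ∑ t ∈ T, if ((U.filter (fun s => r s t)).card < m ∧ r s t) then 1 else 0 := by
      rw [← Finset.card_filter, hN, Finset.filter_filter]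
      congr 1
      ext t
      simp only [not_le]
    rw [h1, hΦ]
    simp only
    rw [← Finset.sum_add_distrib]
    refine Finset.sum_le_sum fun t _ => ?_
    rw [Finset.filter_insert]
    split_ifs with h3 h4 h4
    · rw [Finset.card_insert_of_notMem (by simp [hsU])]
      omega
    · exact absurd h3.2 h4
    · rw [Finset.card_insert_of_notMem (by simp [hsU])]
      omega
    · simp
  have := hmax (insert s U) (by
    rw [Finset.mem_filter, Finset.mem_powerset]
    refine ⟨Finset.insert_subset hsS hUS, ?_⟩
    rw [Finset.card_insert_of_notMem hsU]
    have := Nat.mul_le_mul_left (4 * S.card) hinc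
    nlinarith)
  rw [Finset.card_insert_of_notMem hsU] at this
  omega

open scoped Classical in
lemma core (S T : Finset (F × F × F)) (hS : Set.InjOn Prod.fst (S : Set (F × F × F)))
    (hT : Set.InjOn Prod.fst (T : Set (F × F × F))) (k Q N p : ℕ)
    (hk : ∀ s ∈ S, ∀ s' ∈ S, s ≠ s' → (S.filter (fun s'' => col s s' s'')).card ≤ k)
    (hchar : ∀ n : ℕ, 0 < n → n < p → (n : F) ≠ 0)
    (hN : S.card ≤ N) (hQ : 1000000 * N ≤ Q ^ 2) (hp : 108 * N < p * Q)
    (hST : S.card ≤ T.card) (hTne : T.Nonempty)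
    (hdeg : ∀ t ∈ T, Q + k < (S.filter (fun s => inc s t)).card) : False := by
  set n := S.card with hn
  have hnQ : Q < n := by
    obtain ⟨t, ht⟩ := hTne
    have := hdeg t ht
    have := Finset.card_filter_le S (fun s => inc s t)
    omega
  have hQ0 : 1000 ≤ Q := by
    by_contra hlt
    push Not at hlt
    nlinarith
  set e := 36 * n / Q with he
  have he1 : e * Q ≤ 36 * n := Nat.div_mul_le_self _ _
  have he2 : 36 * n < (e + 1) * Q := by
    have := Nat.lt_div_mul_add (a := 36 * n) (b := Q) (by omega)
    rw [← he] at this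
    linarith
  have hnQ2 : 1000000 * n ≤ Q * Q := by nlinarith
  have heQ : 27000 * e ≤ Q := by
    have : (27000 * e) * Q ≤ Q * Q := by nlinarith
    exact Nat.le_of_mul_le_mul_right this (by omega)
  have hep : 3 * e < p := by
    have : 3 * e * Q < p * Q := by nlinarith
    exact Nat.lt_of_mul_lt_mul_right this
  obtain ⟨S', hS', T', hT', hTT', hT'm, hS'c⟩ := greedy (fun s t => inc s t) S T Q (3 * e + 1)
    (by omega) (by omega) (fun t ht => by have := hdeg t ht; omega)
  obtain ⟨f, hf0, hfd, hfS⟩ := params S' e (by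
    have h1 : 9 * (S'.card * (3 * e + 1)) * Q < 9 * (e + 1) ^ 3 * Q := by
      calc 9 * (S'.card * (3 * e + 1)) * Q = 9 * (3 * e + 1) * (S'.card * Q) := by ring
        _ ≤ 9 * (3 * e + 1) * (4 * (3 * e + 1) * n) := Nat.mul_le_mul_left _ hS'c
        _ = (3 * e + 1) ^ 2 * (36 * n) := by ring
        _ < (3 * e + 1) ^ 2 * ((e + 1) * Q) := Nat.mul_lt_mul_of_pos_left he2 (by positivity)
        _ = ((3 * e + 1) ^ 2 * (e + 1)) * Q := by ring
        _ ≤ 9 * (e + 1) ^ 3 * Q := by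
          apply Nat.mul_le_mul_right
          have : (3 * e + 1) ^ 2 ≤ (3 * (e + 1)) ^ 2 := Nat.pow_le_pow_left (by omega) 2
          calc (3 * e + 1) ^ 2 * (e + 1) ≤ (3 * (e + 1)) ^ 2 * (e + 1) :=
                Nat.mul_le_mul_right _ this
            _ = _ := by ring
    have h2 := Nat.lt_of_mul_lt_mul_right h1
    omega)
  have hT'f : ∀ t ∈ T', aeval (l2 t) f = 0 := by
    intro t ht
    by_contra hne
    have h1 := card_roots_inj _ hne (S'.filter (fun s => inc s t))
      (hS.mono (Finset.coe_subset.mpr ((Finset.filter_subset _ _).trans hS'))) (by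
        intro s hs
        have hs1 := Finset.mem_filter.mp hs
        rw [← eval_inc hs1.2, hfS s hs1.1]; simp)
    have h2 := hT'm t ht
    have h3 := natDegree_l2 t f
    omega
  obtain ⟨U, hU, hUb, hUI⟩ := general_case f S hS k hk hf0
    (fun n h0 h1 => hchar n h0 (by omega)) T' (hT.mono (Finset.coe_subset.mpr hT')) hT'f
  have hb : 720 * e ^ 2 ≤ n := by
    have : 720 * e ^ 2 * (Q * Q) ≤ n * (Q * Q) := by
      calc 720 * e ^ 2 * (Q * Q) = 720 * ((e * Q) * (e * Q)) := by ring
        _ ≤ 720 * ((36 * n) * (36 * n)) := by gcongr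
        _ = 933120 * (n * n) := by ring
        _ ≤ n * (1000000 * n) := by nlinarith
        _ ≤ n * (Q * Q) := Nat.mul_le_mul_left _ hnQ2
    exact Nat.le_of_mul_le_mul_right this (by positivity)
  have hUb2 : (T' \ U).card ≤ 180 * e ^ 2 := by
    have : f.totalDegree ^ 2 ≤ (3 * e) ^ 2 := Nat.pow_le_pow_left hfd 2
    nlinarith
  have hTU : T'.card ≤ (T' \ U).card + U.card := by
    rw [Finset.card_sdiff_add_card]
    exact Finset.card_le_card Finset.subset_union_left
  have hTne' : 0 < T.card := hTne.card_pos
  have h4U : T.card ≤ 4 * U.card := by omega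
  have hlow : U.card * (Q + k + 1) ≤ I S U := by
    unfold I
    rw [← smul_eq_mul]
    exact Finset.card_nsmul_le_sum _ _ _ fun t ht => hdeg t (hT' (hU ht))
  have h5 : f.totalDegree * S.card + U.card * (f.totalDegree + k + 1) ≤
      3 * e * (4 * U.card) + U.card * (3 * e + k + 1) := by
    gcongr
    omega
  have h6 := hlow.trans (hUI.trans h5)
  have hU0 : 0 < U.card := by omega
  have h7 : U.card * (Q + k + 1) ≤ U.card * (15 * e + k + 1) := by nlinarith
  have h8 := Nat.le_of_mul_le_mul_left h7 hU0
  omega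

open scoped Classical in
lemma I_comm (S T : Finset (F × F × F)) : I S T = I T S := by
  unfold I
  have hdc := Finset.sum_card_bipartiteAbove_eq_sum_card_bipartiteBelow
    (s := S) (t := T) (fun s t => inc s t)
  unfold Finset.bipartiteAbove Finset.bipartiteBelow at hdc
  rw [← hdc]
  refine Finset.sum_congr rfl fun s _ => ?_
  congr 1
  ext t
  simp only [Finset.mem_filter, inc_symm]

open scoped Classical in
lemma I_erase (S T : Finset (F × F × F)) (t) (ht : t ∈ T) :
    I S T = I S (T.erase t) + (S.filter (fun s => inc s t)).card := by
  unfold I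
  rw [Finset.sum_erase_add _ _ ht]

open scoped Classical in
theorem incidence (k Q N p : ℕ) (hchar : ∀ n : ℕ, 0 < n → n < p → (n : F) ≠ 0)
    (hQ : 1000000 * N ≤ Q ^ 2) (hp : 108 * N < p * Q) (n : ℕ) :
    ∀ S T : Finset (F × F × F), Set.InjOn Prod.fst (S : Set (F × F × F)) →
    Set.InjOn Prod.fst (T : Set (F × F × F)) →
    (∀ s ∈ S, ∀ s' ∈ S, s ≠ s' → (S.filter (fun s'' => col s s' s'')).card ≤ k) →
    (∀ s ∈ T, ∀ s' ∈ T, s ≠ s' → (T.filter (fun s'' => col s s' s'')).card ≤ k) →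
    S.card + T.card = n → n ≤ N →
    I S T ≤ (Q + k) * n := by
  induction n with
  | zero =>
    intro S T _ _ _ _ h _
    have : T = ∅ := Finset.card_eq_zero.mp (by omega)
    simp [this, I]
  | succ n ih =>
    have step : ∀ S T : Finset (F × F × F), Set.InjOn Prod.fst (S : Set (F × F × F)) →
      Set.InjOn Prod.fst (T : Set (F × F × F)) →
      (∀ s ∈ S, ∀ s' ∈ S, s ≠ s' → (S.filter (fun s'' => col s s' s'')).card ≤ k) →
      (∀ s ∈ T, ∀ s' ∈ T, s ≠ s' → (T.filter (fun s'' => col s s' s'')).card ≤ k) →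
      S.card + T.card = n + 1 → n + 1 ≤ N →
      (∃ t ∈ T, (S.filter (fun s => inc s t)).card ≤ Q + k) → I S T ≤ (Q + k) * (n + 1) := by
      intro S T hS hT hkS hkT hc hN ⟨t, ht, hd⟩
      have hsub : T.erase t ⊆ T := Finset.erase_subset _ _
      have := ih S (T.erase t) hS (hT.mono (Finset.coe_subset.mpr hsub)) hkS
        (fun s hs s' hs' hne => (Finset.card_le_card (Finset.filter_subset_filter _ hsub)).trans
          (hkT s (hsub hs) s' (hsub hs') hne))
        (by rw [Finset.card_erase_of_mem ht]; have := Finset.card_pos.mpr ⟨t, ht⟩; omega)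
        (by omega)
      rw [I_erase S T t ht]
      nlinarith
    intro S T hS hT hkS hkT hc hN
    by_cases h1 : ∃ t ∈ T, (S.filter (fun s => inc s t)).card ≤ Q + k
    · exact step S T hS hT hkS hkT hc hN h1
    by_cases h2 : ∃ s ∈ S, (T.filter (fun t => inc t s)).card ≤ Q + k
    · rw [I_comm]
      exact step T S hT hS hkT hkS (by omega) hN h2
    push Not at h1 h2
    exfalso
    rcases le_total S.card T.card with h | h
    · exact core S T hS hT k Q N p hkS hchar (by omega) hQ hp h
        (Finset.card_pos.mp (by omega)) h1
    · exact core T S hT hS k Q N p hkT hchar (by omega) hQ hp h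
        (Finset.card_pos.mp (by omega)) h2

end SP

namespace SP
section
variable {F : Type*} [Field F]

open scoped Classical in
lemma I_eq (S T : Finset (F × F × F)) :
    I S T = ((S ×ˢ T).filter (fun x => inc x.1 x.2)).card := by
  unfold I
  rw [Finset.card_filter, Finset.sum_product_right]
  refine Finset.sum_congr rfl fun t _ => ?_
  rw [Finset.card_filter]

end

section
variable (p : ℕ) [Fact p.Prime]

/-- the big field -/
abbrev KF := FractionRing (Polynomial (ZMod p))

/-- embedding of polynomials -/
noncomputable abbrev io : Polynomial (ZMod p) →+* KF p := algebraMap _ _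

lemma io_inj : Function.Injective (io p) := IsFractionRing.injective _ _

/-- the generic parameter -/
noncomputable def gX : KF p := io p Polynomial.X

/-- embedding of constants -/
noncomputable def cc : ZMod p →+* KF p := (io p).comp Polynomial.C

lemma cc_inj : Function.Injective (cc p) := (io_inj p).comp Polynomial.C_injective

lemma w_ne (m : ZMod p) : 1 + gX p * cc p m ≠ 0 := by
  have : 1 + gX p * cc p m = io p (1 + Polynomial.X * Polynomial.C m) := by
    simp only [gX, cc, map_add, map_mul, map_one, RingHom.comp_apply]
  rw [this]
  intro h
  have h2 := (map_eq_zero_iff _ (io_inj p)).mp h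
  have := congrArg (fun q => Polynomial.coeff q 0) h2
  simp at this

/-- projective change of coordinates -/
noncomputable def th (v : (ZMod p × ZMod p) × ZMod p) : KF p × KF p × KF p :=
  ((cc p v.2 + gX p ^ 3 * cc p v.1.1 + gX p * cc p v.1.2) / (1 + gX p * cc p v.1.1),
    cc p v.1.1 / (1 + gX p * cc p v.1.1), cc p v.1.2 / (1 + gX p * cc p v.1.1))

lemma th_fst_inj (v v' : (ZMod p × ZMod p) × ZMod p) (h : (th p v).1 = (th p v').1) : v = v' := by
  obtain ⟨⟨m, c⟩, b⟩ := v
  obtain ⟨⟨m', c'⟩, b'⟩ := v'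
  simp only [th] at h
  rw [div_eq_div_iff (w_ne p m) (w_ne p m')] at h
  have h1 : io p ((Polynomial.C b + Polynomial.X ^ 3 * Polynomial.C m + Polynomial.X * Polynomial.C c)
      * (1 + Polynomial.X * Polynomial.C m')) =
      io p ((Polynomial.C b' + Polynomial.X ^ 3 * Polynomial.C m' + Polynomial.X * Polynomial.C c')
      * (1 + Polynomial.X * Polynomial.C m)) := by
    simp only [gX, cc, RingHom.comp_apply] at h
    simp only [map_add, map_mul, map_pow, map_one]
    exact h
  have h2 := io_inj p h1
  have h3 : Polynomial.C b + Polynomial.C (c + b * m') * Polynomial.X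
      + Polynomial.C (c * m') * Polynomial.X ^ 2
      + Polynomial.C m * Polynomial.X ^ 3 + Polynomial.C (m * m') * Polynomial.X ^ 4 =
      Polynomial.C b' + Polynomial.C (c' + b' * m) * Polynomial.X
      + Polynomial.C (c' * m) * Polynomial.X ^ 2
      + Polynomial.C m' * Polynomial.X ^ 3 + Polynomial.C (m * m') * Polynomial.X ^ 4 := by
    simp only [map_add, map_mul]
    linear_combination h2
  have e0 := congrArg (fun q => Polynomial.coeff q 0) h3
  have e1 := congrArg (fun q => Polynomial.coeff q 1) h3
  have e3 := congrArg (fun q => Polynomial.coeff q 3) h3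
  simp [Polynomial.coeff_X, Polynomial.coeff_C, Polynomial.coeff_X_pow, -map_add, -map_mul] at e0 e1 e3
  subst e0 e3
  simp only [Prod.mk.injEq, true_and, and_true]
  linear_combination e1

lemma th_inj : Function.Injective (th p) := fun v v' h => th_fst_inj p v v' (by rw [h])

lemma th_inc (v v' : (ZMod p × ZMod p) × ZMod p)
    (h : v.1.1 * v'.2 + v.1.2 = v'.1.1 * v.2 + v'.1.2) : inc (th p v) (th p v') := by
  obtain ⟨⟨m, c⟩, b⟩ := v
  obtain ⟨⟨m', c'⟩, b'⟩ := v'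
  have h1 := congrArg (cc p) h
  simp only [map_add, map_mul] at h1
  have hw := w_ne p m
  have hw' := w_ne p m'
  simp only [inc, th, div_eq_mul_inv]
  have hi := mul_inv_cancel₀ hw
  have hi' := mul_inv_cancel₀ hw'
  set i := (1 + gX p * cc p m)⁻¹
  set i' := (1 + gX p * cc p m')⁻¹
  linear_combination i * i' * h1 - cc p c * i * hi' + cc p c' * i' * hi

lemma th_col_aux {K : Type*} [Field K] (x x' x'' y y' y'' z z' z'' g b b' b'' m m' m'' c c' c'' : K)
    (w : 1 + g * m ≠ 0) (w' : 1 + g * m' ≠ 0) (w'' : 1 + g * m'' ≠ 0)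
    (hx : x = (b + g ^ 3 * m + g * c) / (1 + g * m)) (hy : y = m / (1 + g * m))
    (hz : z = c / (1 + g * m))
    (hx' : x' = (b' + g ^ 3 * m' + g * c') / (1 + g * m')) (hy' : y' = m' / (1 + g * m'))
    (hz' : z' = c' / (1 + g * m'))
    (hx'' : x'' = (b'' + g ^ 3 * m'' + g * c'') / (1 + g * m'')) (hy'' : y'' = m'' / (1 + g * m''))
    (hz'' : z'' = c'' / (1 + g * m'')) (hne : x' - x ≠ 0)
    (h1 : (y'' - y) * (x' - x) = (y' - y) * (x'' - x))
    (h2 : (z'' - z) * (x' - x) = (z' - z) * (x'' - x)) :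
    ∃ μ : K, b'' - b = μ * (b' - b) ∧ m'' - m = μ * (m' - m) ∧ c'' - c = μ * (c' - c) := by
  set l := (x'' - x) / (x' - x) with hl
  have ex : x'' = (1 - l) * x + l * x' := by
    have : l * (x' - x) = x'' - x := by rw [hl]; field_simp
    linear_combination -this
  have ey : y'' = (1 - l) * y + l * y' := by
    have : y'' - y = (y' - y) * l := by
      rw [hl]; field_simp; linear_combination h1
    linear_combination this
  have ez : z'' = (1 - l) * z + l * z' := by
    have : z'' - z = (z' - z) * l := by
      rw [hl]; field_simp; linear_combination h2
    linear_combination this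
  clear h1 h2
  clear_value l
  have i0 : 1 / (1 + g * m) = 1 - g * y := by rw [hy]; field_simp; ring
  have i1 : 1 / (1 + g * m') = 1 - g * y' := by rw [hy']; field_simp; ring
  have i2 : 1 / (1 + g * m'') = 1 - g * y'' := by rw [hy'']; field_simp; ring
  have b0 : b * (1 - g * y) = x - g ^ 3 * y - g * z := by rw [hy, hx, hz]; field_simp; ring
  have b1 : b' * (1 - g * y') = x' - g ^ 3 * y' - g * z' := by
    rw [hy', hx', hz']; field_simp; ring
  have b2 : b'' * (1 - g * y'') = x'' - g ^ 3 * y'' - g * z'' := by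
    rw [hy'', hx'', hz'']; field_simp; ring
  have m0 : m * (1 - g * y) = y := by
    have yy : y * (1 + g * m) = m := by rw [hy, div_mul_cancel₀ _ w]
    linear_combination -yy
  have m1 : m' * (1 - g * y') = y' := by
    have yy : y' * (1 + g * m') = m' := by rw [hy', div_mul_cancel₀ _ w']
    linear_combination -yy
  have m2 : m'' * (1 - g * y'') = y'' := by
    have yy : y'' * (1 + g * m'') = m'' := by rw [hy'', div_mul_cancel₀ _ w'']
    linear_combination -yy
  have c0 : c * (1 - g * y) = z := by rw [hy, hz]; field_simp; ring
  have c1 : c' * (1 - g * y') = z' := by rw [hy', hz']; field_simp; ring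
  have c2 : c'' * (1 - g * y'') = z'' := by rw [hy'', hz'']; field_simp; ring
  have one : (1 - g * y'') * (1 + g * m'') = 1 := by rw [← i2]; field_simp
  refine ⟨l * (1 - g * y') * (1 + g * m''), ?_, ?_, ?_⟩
  · have key : (b'' - b) * (1 - g * y'') = l * (1 - g * y') * (b' - b) := by
      have e : (1 - g * y'') = (1 - l) * (1 - g * y) + l * (1 - g * y') := by
        rw [ey]; ring
      linear_combination b2 - b * e - (1 - l) * b0 - l * b1 + ex - g ^ 3 * ey - g * ez
    linear_combination (1 + g * m'') * key - (b'' - b) * one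
  · have key : (m'' - m) * (1 - g * y'') = l * (1 - g * y') * (m' - m) := by
      have e : (1 - g * y'') = (1 - l) * (1 - g * y) + l * (1 - g * y') := by
        rw [ey]; ring
      linear_combination m2 - m * e - (1 - l) * m0 - l * m1 + ey
    linear_combination (1 + g * m'') * key - (m'' - m) * one
  · have key : (c'' - c) * (1 - g * y'') = l * (1 - g * y') * (c' - c) := by
      have e : (1 - g * y'') = (1 - l) * (1 - g * y) + l * (1 - g * y') := by
        rw [ey]; ring
      linear_combination c2 - c * e - (1 - l) * c0 - l * c1 + ez
    linear_combination (1 + g * m'') * key - (c'' - c) * one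

lemma th_col (v v' v'' : (ZMod p × ZMod p) × ZMod p) (hne : v ≠ v')
    (h : col (th p v) (th p v') (th p v'')) :
    (v''.2 - v.2) * (v'.1.1 - v.1.1) = (v'.2 - v.2) * (v''.1.1 - v.1.1) ∧
    (v''.2 - v.2) * (v'.1.2 - v.1.2) = (v'.2 - v.2) * (v''.1.2 - v.1.2) ∧
    (v''.1.1 - v.1.1) * (v'.1.2 - v.1.2) = (v'.1.1 - v.1.1) * (v''.1.2 - v.1.2) := by
  obtain ⟨μ, hb, hm, hc⟩ := th_col_aux _ _ _ _ _ _ _ _ _ (gX p) (cc p v.2) (cc p v'.2) (cc p v''.2)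
    (cc p v.1.1) (cc p v'.1.1) (cc p v''.1.1) (cc p v.1.2) (cc p v'.1.2) (cc p v''.1.2)
    (w_ne p _) (w_ne p _) (w_ne p _) (rfl : (th p v).1 = _) (rfl : (th p v).2.1 = _)
    (rfl : (th p v).2.2 = _) (rfl : (th p v').1 = _) (rfl : (th p v').2.1 = _)
    (rfl : (th p v').2.2 = _) (rfl : (th p v'').1 = _) (rfl : (th p v'').2.1 = _)
    (rfl : (th p v'').2.2 = _)
    (fun h0 => hne (th_fst_inj p v v' (sub_eq_zero.mp h0).symm)) h.1 h.2
  refine ⟨cc_inj p ?_, cc_inj p ?_, cc_inj p ?_⟩ <;> simp only [map_mul, map_sub, hb, hm, hc] <;> ring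

/-- the number of coincidences -/
def J (L : Finset (ZMod p × ZMod p)) (B : Finset (ZMod p)) : ℕ :=
  (((L ×ˢ B) ×ˢ (L ×ˢ B)).filter
    (fun q => q.1.1.1 * q.1.2 + q.1.1.2 = q.2.1.1 * q.2.2 + q.2.1.2)).card

open scoped Classical in
theorem J_le (L : Finset (ZMod p × ZMod p)) (B : Finset (ZMod p)) (k Q : ℕ)
    (hkB : B.card ≤ k) (hk1 : (L.image Prod.fst).card ≤ k) (hk2 : ∀ m, (L.filter (fun l => l.1 = m)).card ≤ k)
    (hQ : 2000000 * (L.card * B.card) ≤ Q ^ 2) (hp : 216 * (L.card * B.card) < p * Q) :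
    J p L B ≤ 2 * (Q + k) * (L.card * B.card) := by
  set Th := (L ×ˢ B).image (th p) with hTh
  have hcard : Th.card = L.card * B.card := by
    rw [hTh, Finset.card_image_of_injective _ (th_inj p), Finset.card_product]
  have hfst : Set.InjOn Prod.fst (Th : Set (KF p × KF p × KF p)) := by
    intro s hs t ht hst
    obtain ⟨v, -, rfl⟩ := Finset.mem_image.mp (Finset.mem_coe.mp hs)
    obtain ⟨v', -, rfl⟩ := Finset.mem_image.mp (Finset.mem_coe.mp ht)
    rw [th_fst_inj p v v' hst]
  have hcol : ∀ s ∈ Th, ∀ s' ∈ Th, s ≠ s' → (Th.filter (fun s'' => col s s' s'')).card ≤ k := by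
    intro s hs s' hs' hne
    obtain ⟨v, hv, rfl⟩ := Finset.mem_image.mp hs
    obtain ⟨v', hv', rfl⟩ := Finset.mem_image.mp hs'
    have hne' : v ≠ v' := fun h => hne (by rw [h])
    have h1 : Th.filter (fun s'' => col (th p v) (th p v') s'') =
        ((L ×ˢ B).filter (fun v'' => col (th p v) (th p v') (th p v''))).image (th p) := by
      rw [hTh, Finset.filter_image]
    rw [h1, Finset.card_image_of_injective _ (th_inj p)]
    have hprop : ∀ v'' ∈ (L ×ˢ B).filter (fun v'' => col (th p v) (th p v') (th p v'')), _ :=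
      fun v'' hv'' => th_col p v v' v'' hne' (Finset.mem_filter.mp hv'').2
    by_cases hb : v'.2 - v.2 ≠ 0
    · refine le_trans (Finset.card_le_card_of_injOn Prod.snd ?_ ?_) hkB
      · intro a ha
        exact (Finset.mem_product.mp (Finset.mem_filter.mp ha).1).2
      · intro a ha a' ha' haa
        obtain ⟨e1, e2, e3⟩ := hprop a ha
        obtain ⟨f1, f2, f3⟩ := hprop a' ha'
        rw [haa] at e1 e2
        have g1 := sub_left_injective (mul_left_cancel₀ hb (e1.symm.trans f1))
        have g2 := sub_left_injective (mul_left_cancel₀ hb (e2.symm.trans f2))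
        exact Prod.ext (Prod.ext g1 g2) haa
    push Not at hb
    by_cases hm : v'.1.1 - v.1.1 ≠ 0
    · refine le_trans (Finset.card_le_card_of_injOn (fun a => a.1.1) ?_ ?_) hk1
      · intro a ha
        exact Finset.mem_image_of_mem Prod.fst (Finset.mem_product.mp (Finset.mem_filter.mp ha).1).1
      · intro a ha a' ha' haa
        simp only at haa
        obtain ⟨e1, e2, e3⟩ := hprop a ha
        obtain ⟨f1, f2, f3⟩ := hprop a' ha'
        rw [haa] at e3
        rw [hb, zero_mul] at e1 f1
        have g1 := (mul_eq_zero.mp e1).resolve_right hm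
        have g1' := (mul_eq_zero.mp f1).resolve_right hm
        have g2 := sub_left_injective (mul_left_cancel₀ hm (e3.symm.trans f3))
        exact Prod.ext (Prod.ext haa g2) (by rw [sub_eq_zero.mp g1, sub_eq_zero.mp g1'])
    push Not at hm
    have hc : v'.1.2 - v.1.2 ≠ 0 := by
      intro hc
      exact hne' (Prod.ext (Prod.ext (sub_eq_zero.mp hm).symm (sub_eq_zero.mp hc).symm)
        (sub_eq_zero.mp hb).symm)
    have hbm : ∀ v'' ∈ (L ×ˢ B).filter (fun v'' => col (th p v) (th p v') (th p v'')),
        v''.2 = v.2 ∧ v''.1.1 = v.1.1 := by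
      intro v'' hv''
      obtain ⟨e1, e2, e3⟩ := hprop v'' hv''
      rw [hb, zero_mul] at e2
      rw [hm, zero_mul] at e3
      exact ⟨sub_eq_zero.mp ((mul_eq_zero.mp e2).resolve_right hc),
        sub_eq_zero.mp ((mul_eq_zero.mp e3).resolve_right hc)⟩
    refine le_trans (Finset.card_le_card_of_injOn Prod.fst ?_ ?_) (hk2 v.1.1)
    · intro a ha
      exact Finset.mem_coe.mpr (Finset.mem_filter.mpr
        ⟨(Finset.mem_product.mp (Finset.mem_filter.mp ha).1).1, (hbm a ha).2⟩)
    · intro a ha a' ha' haa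
      exact Prod.ext haa (by rw [(hbm a ha).1, (hbm a' ha').1])
  have hchar : ∀ n : ℕ, 0 < n → n < p → (n : KF p) ≠ 0 := by
    intro n h0 h1 h2
    have h3 : cc p (n : ZMod p) = 0 := by rw [map_natCast]; exact h2
    have h4 := (map_eq_zero_iff _ (cc_inj p)).mp h3
    rw [ZMod.natCast_eq_zero_iff] at h4
    exact absurd (Nat.le_of_dvd h0 h4) (by omega)
  have main := incidence (F := KF p) k Q (2 * (L.card * B.card)) p hchar (by omega) (by omega)
    (2 * (L.card * B.card)) Th Th hfst hfst hcol hcol (by omega) le_rfl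
  have hJ : J p L B ≤ I Th Th := by
    rw [I_eq]
    unfold J
    refine Finset.card_le_card_of_injOn
      (fun q => (th p (q.1.1, q.2.2), th p (q.2.1, q.1.2))) ?_ ?_
    · intro q hq
      have hq1 := Finset.mem_filter.mp (Finset.mem_coe.mp hq)
      have hq2 := hq1.1
      simp only [Finset.mem_product] at hq2
      refine Finset.mem_coe.mpr (Finset.mem_filter.mpr ⟨?_, ?_⟩)
      · refine Finset.mem_product.mpr ⟨Finset.mem_image_of_mem _ ?_, Finset.mem_image_of_mem _ ?_⟩
        · exact Finset.mem_product.mpr ⟨hq2.1.1, hq2.2.2⟩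
        · exact Finset.mem_product.mpr ⟨hq2.2.1, hq2.1.2⟩
      · exact th_inc p _ _ hq1.2
    · intro q _ q' _ h
      have h1 := th_inj p (Prod.ext_iff.mp h).1
      have h2 := th_inj p (Prod.ext_iff.mp h).2
      simp only [Prod.mk.injEq] at h1 h2
      exact Prod.ext (Prod.ext h1.1 h2.2) (Prod.ext h2.1 h1.2)
  calc J p L B ≤ _ := hJ
    _ ≤ _ := main
    _ = _ := by ring

end
end SP

namespace SP

lemma J_bound (κ : ℝ) (hκ : 0 < κ) : ∃ C : ℝ, 0 < C ∧ ∀ (p : ℕ) [Fact p.Prime]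
    (L : Finset (ZMod p × ZMod p)) (B : Finset (ZMod p)) (N : ℕ), N = L.card * B.card →
    (N : ℝ) ≤ κ * (p : ℝ) ^ 2 → B.card ^ 2 ≤ N → (L.image Prod.fst).card ^ 2 ≤ N →
    (∀ m, (L.filter (fun l => l.1 = m)).card ^ 2 ≤ N) →
    (J p L B : ℝ) ^ 2 ≤ C * (N : ℝ) ^ 3 := by
  set c : ℝ := 1500 + 217 * √κ with hc
  have hκ' : 0 < √κ := Real.sqrt_pos.mpr hκ
  have hc0 : 1500 ≤ c := by rw [hc]; linarith
  refine ⟨(2 * (c + 2)) ^ 2, by positivity, ?_⟩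
  intro p _ L B N hN hNp hB hL1 hL2
  have hp : (0 : ℝ) < p := by exact_mod_cast (Fact.out : p.Prime).pos
  rcases Nat.eq_zero_or_pos N with h0 | hpos
  · have : J p L B = 0 := by
      unfold J
      have hE : L ×ˢ B = ∅ := by
        rw [← Finset.card_eq_zero, Finset.card_product, ← hN, h0]
      rw [hE]; simp
    rw [this, h0]; simp
  have hN1 : (1 : ℝ) ≤ N := by exact_mod_cast hpos
  set r := √(N : ℝ) with hr
  have hrr : r ^ 2 = N := Real.sq_sqrt (by positivity)
  have hr1 : 1 ≤ r := by rw [hr]; exact Real.one_le_sqrt.mpr hN1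
  have hrp : r ≤ √κ * p := by
    rw [hr]
    apply Real.sqrt_le_iff.mpr
    refine ⟨by positivity, ?_⟩
    rw [mul_pow, Real.sq_sqrt hκ.le]; exact hNp
  set Q := ⌈c * r⌉₊ with hQ
  have hQ1 : c * r ≤ Q := Nat.le_ceil _
  have hQ2 : (Q : ℝ) ≤ c * r + 1 := (Nat.ceil_lt_add_one (by positivity)).le
  have hk : ∀ n : ℕ, n ^ 2 ≤ N → n ≤ Nat.sqrt N := fun n hn => Nat.le_sqrt'.mpr hn
  have hsq : (Nat.sqrt N : ℝ) ≤ r := Real.nat_sqrt_le_real_sqrt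
  have key := J_le p L B (Nat.sqrt N) Q (hk _ hB) (hk _ (by convert hL1)) (fun m => hk _ (by convert hL2 m))
    (by
      rw [← hN]
      have : (2000000 * N : ℝ) ≤ (Q : ℝ) ^ 2 := by
        calc (2000000 * N : ℝ) ≤ 1500 ^ 2 * r ^ 2 := by rw [hrr]; nlinarith
          _ = (1500 * r) ^ 2 := by ring
          _ ≤ (Q : ℝ) ^ 2 := by
            apply pow_le_pow_left₀ (by positivity)
            nlinarith
      exact_mod_cast this)
    (by
      rw [← hN]
      have : (216 * N : ℝ) < p * Q := by
        calc (216 * N : ℝ) = 216 * (r * r) := by rw [← hrr]; ring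
          _ ≤ 216 * ((√κ * p) * r) := by gcongr
          _ = p * ((216 * √κ) * r) := by ring
          _ < p * (c * r) := by
            apply mul_lt_mul_of_pos_left _ hp
            apply mul_lt_mul_of_pos_right _ (by linarith)
            rw [hc]; linarith
          _ ≤ p * Q := by gcongr
      exact_mod_cast this)
  rw [← hN] at key
  have key' : (J p L B : ℝ) ≤ 2 * (Q + Nat.sqrt N) * N := by exact_mod_cast key
  have h3 : (J p L B : ℝ) ≤ 2 * (c + 2) * r * N := by
    refine key'.trans ?_
    apply mul_le_mul_of_nonneg_right _ (by positivity)
    nlinarith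
  calc (J p L B : ℝ) ^ 2 ≤ (2 * (c + 2) * r * N) ^ 2 := pow_le_pow_left₀ (by positivity) h3 2
    _ = (2 * (c + 2)) ^ 2 * (r ^ 2) * N ^ 2 := by ring
    _ = (2 * (c + 2)) ^ 2 * (N : ℝ) ^ 3 := by rw [hrr]; ring

lemma csq {α β : Type*} [DecidableEq α] [DecidableEq β] (s : Finset α) (t : Finset β) (f : α → β)
    (h : ∀ x ∈ s, f x ∈ t) :
    s.card ^ 2 ≤ t.card * ((s ×ˢ s).filter (fun q => f q.1 = f q.2)).card := by
  rw [Finset.card_eq_sum_card_fiberwise (f := f) (t := t) (s := s) h]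
  refine (sq_sum_le_card_mul_sum_sq).trans ?_
  apply Nat.mul_le_mul_left
  rw [Finset.card_eq_sum_card_fiberwise (f := fun q => f q.1) (t := t)
    (s := (s ×ˢ s).filter (fun q => f q.1 = f q.2))]
  · refine Finset.sum_le_sum fun b _ => ?_
    rw [sq, ← Finset.card_product]
    apply Finset.card_le_card
    intro q hq
    simp only [Finset.mem_product, Finset.mem_filter] at hq ⊢
    exact ⟨⟨⟨hq.1.1, hq.2.1⟩, hq.1.2.trans hq.2.2.symm⟩, hq.1.2⟩
  · intro q hq
    exact h _ (Finset.mem_product.mp (Finset.mem_filter.mp hq).1).1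

section
variable {p : ℕ} [Fact p.Prime]

/-- fibres of the difference map -/
def fib (A : Finset (ZMod p)) (d : ZMod p) : Finset (ZMod p × ZMod p) :=
  (A ×ˢ A).filter (fun q => q.1 - q.2 = d)

lemma mem_fib {A : Finset (ZMod p)} {d : ZMod p} {q : ZMod p × ZMod p} :
    q ∈ fib A d ↔ (q.1 ∈ A ∧ q.2 ∈ A) ∧ q.1 - q.2 = d := by
  simp [fib]

/-- representation function -/
def rr (A : Finset (ZMod p)) (d : ZMod p) : ℕ := (fib A d).card

lemma sum_rr_sub (A P : Finset (ZMod p)) :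
    ∑ d ∈ P, rr A d = ((A ×ˢ A).filter (fun q => q.1 - q.2 ∈ P)).card := by
  rw [Finset.card_eq_sum_card_fiberwise (f := fun q => q.1 - q.2) (t := P)]
  · refine Finset.sum_congr rfl fun d hd => ?_
    unfold rr fib
    rw [Finset.filter_filter]
    congr 1
    ext q
    simp only [Finset.mem_filter, and_congr_right_iff]
    intro _
    constructor
    · rintro rfl; exact ⟨hd, rfl⟩
    · exact fun h => h.2
  · intro q hq
    exact (Finset.mem_filter.mp hq).2

lemma sum_rr (A : Finset (ZMod p)) : ∑ d ∈ A - A, rr A d = A.card ^ 2 := by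
  rw [sum_rr_sub, sq, ← Finset.card_product]
  congr 1
  rw [Finset.filter_true_of_mem]
  intro q hq
  exact Finset.sub_mem_sub (Finset.mem_product.mp hq).1 (Finset.mem_product.mp hq).2

/-- energy of A with A-A -/
def EE (A : Finset (ZMod p)) : ℕ := ∑ v ∈ (A - A) ×ˢ (A - A), rr A (v.1 - v.2)

/-- third moment -/
def E3 (A : Finset (ZMod p)) : ℕ := ∑ d ∈ A - A, rr A d ^ 3

lemma third_moment (A : Finset (ZMod p)) (hA : A.Nonempty) :
    A.card ^ 8 ≤ 8 * (A - A).card * EE A * E3 A := by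
  set a := A.card with ha
  have ha0 : 0 < a := hA.card_pos
  set X := A - A with hX
  set P := X.filter (fun x => a ^ 2 ≤ 2 * X.card * rr A x) with hP
  set W := (A ×ˢ A).filter (fun q => q.1 - q.2 ∈ P) with hW
  have hX0 : 0 < X.card := (Finset.Nonempty.sub hA hA).card_pos
  have hWc : a ^ 2 ≤ 2 * W.card := by
    rw [hW, ← sum_rr_sub]
    have h1 : ∑ d ∈ X, rr A d = a ^ 2 := sum_rr A
    have h2 : ∑ d ∈ P, rr A d + ∑ d ∈ X.filter (fun x => ¬ a ^ 2 ≤ 2 * X.card * rr A x), rr A d =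
      ∑ d ∈ X, rr A d := Finset.sum_filter_add_sum_filter_not _ _ _
    have h3 : 2 * X.card * ∑ d ∈ X.filter (fun x => ¬ a ^ 2 ≤ 2 * X.card * rr A x), rr A d ≤
        X.card * a ^ 2 := by
      rw [Finset.mul_sum]
      calc _ ≤ ∑ d ∈ X.filter (fun x => ¬ a ^ 2 ≤ 2 * X.card * rr A x), a ^ 2 := by
            refine Finset.sum_le_sum fun d hd => ?_
            exact (not_le.mp (Finset.mem_filter.mp hd).2).le
        _ = (X.filter (fun x => ¬ a ^ 2 ≤ 2 * X.card * rr A x)).card * a ^ 2 := by simp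
        _ ≤ _ := Nat.mul_le_mul_right _ (Finset.card_filter_le _ _)
    have h4 : 2 * ∑ d ∈ X.filter (fun x => ¬ a ^ 2 ≤ 2 * X.card * rr A x), rr A d ≤ a ^ 2 := by
      apply Nat.le_of_mul_le_mul_left _ hX0
      linarith
    omega
  set V := (X ×ˢ X).filter (fun v => v.1 - v.2 ∈ P) with hV
  have hcs := csq (A ×ˢ W) V (fun q => (q.2.1 - q.1, q.2.2 - q.1)) (by
    intro q hq
    simp only [Finset.mem_product, hW, Finset.mem_filter] at hq
    rw [hV, Finset.mem_filter, Finset.mem_product]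
    refine ⟨⟨Finset.sub_mem_sub hq.2.1.1 hq.1, Finset.sub_mem_sub hq.2.1.2 hq.1⟩, ?_⟩
    simpa using hq.2.2)
  have hE3 : (((A ×ˢ W) ×ˢ (A ×ˢ W)).filter (fun q : (ZMod p × ZMod p × ZMod p) × (ZMod p × ZMod p × ZMod p) => (q.1.2.1 - q.1.1, q.1.2.2 - q.1.1) =
      (q.2.2.1 - q.2.1, q.2.2.2 - q.2.1))).card ≤ E3 A := by
    have : E3 A = (X.sigma (fun d => fib A d ×ˢ (fib A d ×ˢ fib A d))).card := by
      rw [Finset.card_sigma]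
      unfold E3 rr
      refine Finset.sum_congr rfl fun d _ => ?_
      rw [Finset.card_product, Finset.card_product]; ring
    rw [this]
    refine Finset.card_le_card_of_injOn (fun q => ⟨q.2.1 - q.1.1,
      ((q.2.1, q.1.1), ((q.2.2.1, q.1.2.1), (q.2.2.2, q.1.2.2)))⟩) ?_ ?_
    · intro q hq
      simp only [Finset.coe_filter, Finset.mem_product, hW, Finset.mem_filter, Set.mem_setOf_eq,
        Prod.mk.injEq] at hq
      obtain ⟨⟨⟨h1, h2, _⟩, h3, h4, _⟩, h5, h6⟩ := hq
      simp only [Finset.mem_coe, Finset.mem_sigma, Finset.mem_product, mem_fib]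
      refine ⟨Finset.sub_mem_sub h3 h1, ⟨⟨h3, h1⟩, trivial⟩, ⟨⟨h4.1, h2.1⟩, ?_⟩, ⟨⟨h4.2, h2.2⟩, ?_⟩⟩
      · linear_combination -h5
      · linear_combination -h6
    · intro q _ q' _ h
      simp only [Sigma.mk.injEq, heq_eq_eq, Prod.mk.injEq] at h
      obtain ⟨_, ⟨h1, h2⟩, ⟨h3, h4⟩, h5, h6⟩ := h
      exact Prod.ext (Prod.ext h2 (Prod.ext h4 h6)) (Prod.ext h1 (Prod.ext h3 h5))
  have hVE : V.card * a ^ 2 ≤ 2 * X.card * EE A := by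
    calc V.card * a ^ 2 = ∑ v ∈ V, a ^ 2 := by simp
      _ ≤ ∑ v ∈ V, 2 * X.card * rr A (v.1 - v.2) := by
        refine Finset.sum_le_sum fun v hv => ?_
        exact (Finset.mem_filter.mp (Finset.mem_filter.mp hv).2).2
      _ = 2 * X.card * ∑ v ∈ V, rr A (v.1 - v.2) := by rw [Finset.mul_sum]
      _ ≤ _ := by
        apply Nat.mul_le_mul_left
        unfold EE
        exact Finset.sum_le_sum_of_subset (Finset.filter_subset _ _)
  rw [Finset.card_product] at hcs
  have h1 : (a * W.card) ^ 2 ≤ V.card * E3 A := hcs.trans (Nat.mul_le_mul_left _ hE3)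
  have h2 : (a ^ 2) ^ 2 ≤ (2 * W.card) ^ 2 := Nat.pow_le_pow_left hWc 2
  calc a ^ 8 = a ^ 4 * (a ^ 2) ^ 2 := by ring
    _ ≤ a ^ 4 * (2 * W.card) ^ 2 := Nat.mul_le_mul_left _ h2
    _ = 4 * a ^ 2 * (a * W.card) ^ 2 := by ring
    _ ≤ 4 * a ^ 2 * (V.card * E3 A) := Nat.mul_le_mul_left _ h1
    _ = 4 * E3 A * (V.card * a ^ 2) := by ring
    _ ≤ 4 * E3 A * (2 * X.card * EE A) := Nat.mul_le_mul_left _ hVE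
    _ = _ := by ring

lemma energy_J (A : Finset (ZMod p)) (h0 : 0 ∉ A) :
    A.card ^ 2 * EE A ≤ J p ((A * A) ×ˢ (A - A)) (A.image (fun x => x⁻¹)) := by
  have : A.card ^ 2 * EE A =
      ((A ×ˢ A) ×ˢ (((A - A) ×ˢ (A - A)).sigma (fun v => fib A (v.1 - v.2)))).card := by
    rw [Finset.card_product, Finset.card_product, Finset.card_sigma, sq]
    rfl
  rw [this]
  unfold J
  have hne : ∀ u ∈ A, u ≠ 0 := fun u hu h => h0 (h ▸ hu)
  refine Finset.card_le_card_of_injOn (fun q => (((q.2.2.1 * q.1.1, q.2.1.2), (q.1.1)⁻¹),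
    ((q.2.2.2 * q.1.2, q.2.1.1), (q.1.2)⁻¹))) ?_ ?_
  · rintro ⟨⟨u, v⟩, ⟨⟨x, y⟩, ⟨a1, a2⟩⟩⟩ hq
    simp only [Finset.mem_coe, Finset.mem_sigma, Finset.mem_product, mem_fib] at hq
    obtain ⟨⟨hu, hv⟩, ⟨hx, hy⟩, ⟨h1, h2⟩, h3⟩ := hq
    simp only [Finset.mem_coe, Finset.mem_filter, Finset.mem_product]
    refine ⟨⟨⟨⟨Finset.mul_mem_mul h1 hu, hy⟩, Finset.mem_image_of_mem _ hu⟩,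
      ⟨Finset.mul_mem_mul h2 hv, hx⟩, Finset.mem_image_of_mem _ hv⟩, ?_⟩
    rw [mul_inv_cancel_right₀ (hne u hu), mul_inv_cancel_right₀ (hne v hv)]
    linear_combination h3
  · rintro ⟨⟨u, v⟩, ⟨⟨x, y⟩, ⟨a1, a2⟩⟩⟩ hq ⟨⟨u', v'⟩, ⟨⟨x', y'⟩, ⟨a1', a2'⟩⟩⟩ hq' h
    simp only [Finset.mem_coe, Finset.mem_sigma, Finset.mem_product, mem_fib] at hq hq'
    simp only [Prod.mk.injEq] at h
    obtain ⟨⟨⟨h1, h2⟩, h3⟩, ⟨h4, h5⟩, h6⟩ := h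
    have e1 := inv_injective h3
    have e2 := inv_injective h6
    subst e1 e2 h2 h5
    have e3 := mul_right_cancel₀ (hne _ hq.1.1) h1
    have e4 := mul_right_cancel₀ (hne _ hq.1.2) h4
    subst e3 e4
    rfl

/-- popular differences -/
def Dt (A : Finset (ZMod p)) (t : ℕ) : Finset (ZMod p) := (A - A).filter (fun d => t ≤ rr A d)

/-- line set for the popular differences -/
def Lt (A : Finset (ZMod p)) (t : ℕ) : Finset (ZMod p × ZMod p) :=
  (A ×ˢ Dt A t).image (fun q => (q.1, q.1 * q.2))

lemma Lt_card (A : Finset (ZMod p)) (h0 : 0 ∉ A) (t : ℕ) :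
    (Lt A t).card = A.card * (Dt A t).card := by
  have hne : ∀ u ∈ A, u ≠ 0 := fun u hu h => h0 (h ▸ hu)
  unfold Lt
  rw [Finset.card_image_of_injOn, Finset.card_product]
  rintro ⟨c, d⟩ hq ⟨c', d'⟩ hq' h
  simp only [Prod.mk.injEq] at h
  obtain ⟨rfl, h⟩ := h
  rw [mul_left_cancel₀ (hne c (Finset.mem_product.mp hq).1) h]

lemma popular_J (A : Finset (ZMod p)) (h0 : 0 ∉ A) (t : ℕ) :
    (A.card * (t * (Dt A t).card)) ^ 2 ≤ (A * A).card * J p (Lt A t) A := by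
  have hne : ∀ u ∈ A, u ≠ 0 := fun u hu h => h0 (h ▸ hu)
  set W := (A ×ˢ A).filter (fun q => q.1 - q.2 ∈ Dt A t) with hW
  have hWc : t * (Dt A t).card ≤ W.card := by
    rw [hW, ← sum_rr_sub, mul_comm, ← smul_eq_mul]
    exact Finset.card_nsmul_le_sum _ _ _ fun d hd => (Finset.mem_filter.mp hd).2
  have hcs := csq (A ×ˢ W) (A * A) (fun q => q.1 * q.2.1) (by
    intro q hq
    simp only [Finset.mem_product, hW, Finset.mem_filter] at hq
    exact Finset.mul_mem_mul hq.1 hq.2.1.1)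
  rw [Finset.card_product] at hcs
  refine le_trans (Nat.pow_le_pow_left (Nat.mul_le_mul_left _ hWc) 2) (hcs.trans ?_)
  apply Nat.mul_le_mul_left
  unfold J
  refine Finset.card_le_card_of_injOn (fun q => (((q.1.1, q.1.1 * (q.1.2.1 - q.1.2.2)), q.1.2.2),
    ((q.2.1, q.2.1 * (q.2.2.1 - q.2.2.2)), q.2.2.2))) ?_ ?_
  · rintro ⟨⟨c, u, b⟩, ⟨c', u', b'⟩⟩ hq
    simp only [Finset.mem_coe, Finset.mem_filter, Finset.mem_product, hW] at hq
    obtain ⟨⟨⟨h1, ⟨h2, h3⟩, h4⟩, h5, ⟨h6, h7⟩, h8⟩, h9⟩ := hq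
    simp only [Finset.mem_coe, Finset.mem_filter, Finset.mem_product]
    refine ⟨⟨⟨?_, h3⟩, ?_, h7⟩, ?_⟩
    · exact Finset.mem_image.mpr ⟨(c, u - b), Finset.mem_product.mpr ⟨h1, h4⟩, rfl⟩
    · exact Finset.mem_image.mpr ⟨(c', u' - b'), Finset.mem_product.mpr ⟨h5, h8⟩, rfl⟩
    · linear_combination h9
  · rintro ⟨⟨c, u, b⟩, ⟨c', u', b'⟩⟩ hq ⟨⟨c1, u1, b1⟩, ⟨c1', u1', b1'⟩⟩ _ h
    simp only [Finset.mem_coe, Finset.mem_filter, Finset.mem_product, hW] at hq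
    obtain ⟨⟨⟨h1, ⟨h2, h3⟩, h4⟩, h5, ⟨h6, h7⟩, h8⟩, h9⟩ := hq
    simp only [Prod.mk.injEq] at h
    obtain ⟨⟨⟨rfl, e1⟩, rfl⟩, ⟨rfl, e2⟩, rfl⟩ := h
    have g1 := sub_left_injective (mul_left_cancel₀ (hne _ h1) e1)
    have g2 := sub_left_injective (mul_left_cancel₀ (hne _ h5) e2)
    subst g1 g2
    rfl

end
end SP

namespace SP

variable {p : ℕ} [Fact p.Prime]

lemma rr_le (A : Finset (ZMod p)) (d : ZMod p) : rr A d ≤ A.card := by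
  unfold rr
  refine Finset.card_le_card_of_injOn Prod.fst ?_ ?_
  · intro q hq
    have := mem_fib.mp hq
    tauto
  · intro q hq q' hq' h
    have h1 := mem_fib.mp hq
    have h2 := mem_fib.mp hq'
    ext
    · exact h
    · grind

lemma cube_le_sum (τ r : ℕ) : r ^ 3 ≤ 3 * τ ^ 2 * r + ∑ t ∈ Finset.Ioc τ r, 3 * t ^ 2 := by
  rcases le_total r τ with h | h
  · have : r ^ 3 ≤ τ ^ 2 * r := by
      calc r ^ 3 = r ^ 2 * r := by ring
        _ ≤ τ ^ 2 * r := by gcongr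
    rw [Finset.Ioc_eq_empty_of_le h, Finset.sum_empty]
    have h' := Nat.zero_le (τ ^ 2 * r)
    linarith
  · have key : r ^ 3 ≤ τ ^ 3 + ∑ t ∈ Finset.Ioc τ r, 3 * t ^ 2 := by
      induction r, h using Nat.le_induction with
      | base => simp
      | succ n hn ih =>
        rw [Finset.sum_Ioc_succ_top (by omega)]
        nlinarith
    have : τ ^ 3 ≤ τ ^ 2 * r := by
      calc τ ^ 3 = τ ^ 2 * τ := by ring
        _ ≤ τ ^ 2 * r := by gcongr
    nlinarith

lemma E3_le (A : Finset (ZMod p)) (τ : ℕ) :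
    E3 A ≤ 3 * τ ^ 2 * A.card ^ 2 + ∑ t ∈ Finset.Ioc τ A.card, 3 * t ^ 2 * (Dt A t).card := by
  have h1 : ∀ d ∈ A - A, rr A d ^ 3 ≤ 3 * τ ^ 2 * rr A d +
      ∑ t ∈ Finset.Ioc τ A.card, if t ≤ rr A d then 3 * t ^ 2 else 0 := by
    intro d _
    refine (cube_le_sum τ _).trans ?_
    gcongr
    rw [← Finset.sum_filter]
    refine Finset.sum_le_sum_of_subset ?_
    intro t ht
    have := rr_le A d
    simp only [Finset.mem_Ioc, Finset.mem_filter] at ht ⊢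
    omega
  unfold E3
  refine (Finset.sum_le_sum h1).trans ?_
  rw [Finset.sum_add_distrib, ← Finset.mul_sum, sum_rr, Finset.sum_comm]
  gcongr with t ht
  rw [← Finset.sum_filter, Finset.sum_const, smul_eq_mul]
  unfold Dt
  rw [mul_comm]

lemma card_sub_ge (A : Finset (ZMod p)) (hA : A.Nonempty) : A.card ≤ (A - A).card :=
  Finset.card_le_card_sub_right hA

lemma card_mul_ge (A : Finset (ZMod p)) (hA : A.Nonempty) (h0 : 0 ∉ A) :
    A.card ≤ (A * A).card := by
  obtain ⟨x, hx⟩ := hA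
  have hx0 : x ≠ 0 := fun h => h0 (h ▸ hx)
  refine Finset.card_le_card_of_injOn (fun y => x * y) ?_ ?_
  · intro y hy
    exact Finset.mul_mem_mul hx hy
  · intro y _ z _ h
    exact mul_left_cancel₀ hx0 h

lemma sub_le_sq (A : Finset (ZMod p)) : (A - A).card ≤ A.card ^ 2 := by
  rw [sq]; exact Finset.card_sub_le

lemma mul_le_sq (A : Finset (ZMod p)) : (A * A).card ≤ A.card ^ 2 := by
  rw [sq]; exact Finset.card_mul_le

lemma E_bound (κ : ℝ) (hκ : 0 < κ) : ∃ C : ℝ, 0 < C ∧ ∀ (p : ℕ) [Fact p.Prime]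
    (A : Finset (ZMod p)), A.Nonempty → 0 ∉ A →
    ((A.card * (A * A).card * (A - A).card : ℕ) : ℝ) ≤ κ * (p : ℝ) ^ 2 →
    (A.card : ℝ) * (EE A : ℝ) ^ 2 ≤ C * ((A * A).card : ℝ) ^ 3 * ((A - A).card : ℝ) ^ 3 := by
  obtain ⟨C, hC, h⟩ := J_bound κ hκ
  refine ⟨C, hC, ?_⟩
  intro p _ A hA h0 hN
  have hB : (A.image (fun x => x⁻¹)).card = A.card :=
    Finset.card_image_of_injective _ inv_injective
  have hD := card_sub_ge A hA
  have hM := card_mul_ge A hA h0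
  have hD2 := sub_le_sq A
  have hM2 := mul_le_sq A
  have ha : 0 < A.card := hA.card_pos
  have hJ := h p ((A * A) ×ˢ (A - A)) (A.image (fun x => x⁻¹))
    (A.card * (A * A).card * (A - A).card)
    (by rw [hB, Finset.card_product]; ring) hN ?_ ?_ ?_
  · have hE : ((A.card : ℝ) ^ 2 * EE A) ≤ J p ((A * A) ×ˢ (A - A)) (A.image (fun x => x⁻¹)) := by
      exact_mod_cast energy_J A h0
    have h2 := (pow_le_pow_left₀ (by positivity) hE 2).trans hJ
    have ha' : (0 : ℝ) < A.card := by exact_mod_cast ha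
    have : (A.card : ℝ) ^ 3 * ((A.card : ℝ) * (EE A : ℝ) ^ 2) ≤
        (A.card : ℝ) ^ 3 * (C * ((A * A).card : ℝ) ^ 3 * ((A - A).card : ℝ) ^ 3) := by
      push_cast at h2
      linarith
    exact le_of_mul_le_mul_left this (by positivity)
  · rw [hB]
    calc A.card ^ 2 ≤ A.card * (A * A).card * 1 := by rw [sq, mul_one]; gcongr
      _ ≤ _ := by gcongr; omega
  · have : (((A * A) ×ˢ (A - A)).image Prod.fst).card ≤ (A * A).card := by
      apply Finset.card_le_card
      intro x hx
      simp only [Finset.mem_image, Finset.mem_product] at hx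
      obtain ⟨y, hy, rfl⟩ := hx
      exact hy.1
    calc _ ≤ (A * A).card ^ 2 := by gcongr
      _ = (A * A).card * (A * A).card := sq _
      _ ≤ A.card ^ 2 * (A * A).card := by gcongr
      _ = A.card * (A * A).card * A.card := by ring
      _ ≤ _ := by gcongr
  · intro m
    have : (((A * A) ×ˢ (A - A)).filter (fun l => l.1 = m)).card ≤ (A - A).card := by
      refine Finset.card_le_card_of_injOn Prod.snd ?_ ?_
      · intro q hq
        simp at hq
        exact_mod_cast (by simpa using hq.1.2)
      · intro q hq q' hq' hh
        simp at hq hq'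
        ext
        · rw [hq.2, hq'.2]
        · exact hh
    calc _ ≤ (A - A).card ^ 2 := by gcongr
      _ = (A - A).card * (A - A).card := sq _
      _ ≤ A.card ^ 2 * (A - A).card := by gcongr
      _ = A.card * A.card * (A - A).card := by ring
      _ ≤ _ := by gcongr

lemma D_bound (κ : ℝ) (hκ : 0 < κ) : ∃ C : ℝ, 0 < C ∧ ∀ (p : ℕ) [Fact p.Prime]
    (A : Finset (ZMod p)), A.Nonempty → 0 ∉ A →
    ((A.card * (A * A).card * (A - A).card : ℕ) : ℝ) ≤ κ * (p : ℝ) ^ 2 →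
    ∀ t : ℕ, (t : ℝ) ^ 4 * ((Dt A t).card : ℝ) ≤
      C * ((A * A).card : ℝ) ^ 2 * (A.card : ℝ) ^ 2 := by
  obtain ⟨C, hC, h⟩ := J_bound κ hκ
  refine ⟨C, hC, ?_⟩
  intro p _ A hA h0 hN t
  have hM := card_mul_ge A hA h0
  have hD2 := sub_le_sq A
  have ha : 0 < A.card := hA.card_pos
  have hDD : (Dt A t).card ≤ (A - A).card := Finset.card_filter_le _ _
  rcases Nat.eq_zero_or_pos (Dt A t).card with hz | hd
  · rw [hz]; simp; positivity
  have hJ := h p (Lt A t) A (A.card ^ 2 * (Dt A t).card)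
    (by rw [Lt_card A h0]; ring) ?_ ?_ ?_ ?_
  · have hP : ((A.card : ℝ) * (t * (Dt A t).card)) ^ 2 ≤ (A * A).card * J p (Lt A t) A := by
      exact_mod_cast popular_J A h0 t
    have h2 := pow_le_pow_left₀ (by positivity) hP 2
    have ha' : (0 : ℝ) < A.card := by exact_mod_cast ha
    have hd' : (0 : ℝ) < (Dt A t).card := by exact_mod_cast hd
    have h3 : ((A * A).card : ℝ) ^ 2 * (J p (Lt A t) A : ℝ) ^ 2 ≤
      ((A * A).card : ℝ) ^ 2 * (C * ((A.card ^ 2 * (Dt A t).card : ℕ) : ℝ) ^ 3) := by gcongr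
    have : ((A.card : ℝ) ^ 4 * ((Dt A t).card : ℝ) ^ 3) * ((t : ℝ) ^ 4 * ((Dt A t).card : ℝ)) ≤
        ((A.card : ℝ) ^ 4 * ((Dt A t).card : ℝ) ^ 3) *
        (C * ((A * A).card : ℝ) ^ 2 * (A.card : ℝ) ^ 2) := by
      push_cast at h3
      linarith
    exact le_of_mul_le_mul_left this (by positivity)
  · refine le_trans ?_ hN
    have : A.card ^ 2 * (Dt A t).card ≤ A.card * (A * A).card * (A - A).card := by
      rw [sq]; gcongr
    exact_mod_cast this
  · exact Nat.le_mul_of_pos_right _ hd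
  · have : ((Lt A t).image Prod.fst).card ≤ A.card := by
      apply Finset.card_le_card
      intro x hx
      simp only [Lt, Finset.mem_image, Finset.mem_product] at hx
      obtain ⟨y, ⟨q, hq, rfl⟩, rfl⟩ := hx
      exact hq.1
    calc _ ≤ A.card ^ 2 := by gcongr
      _ ≤ _ := Nat.le_mul_of_pos_right _ hd
  · intro m
    have : ((Lt A t).filter (fun l => l.1 = m)).card ≤ (Dt A t).card := by
      refine (Finset.card_le_card (t := (Dt A t).image (fun d => (m, m * d))) ?_).trans
        Finset.card_image_le
      intro x hx
      simp only [Lt, Finset.mem_image, Finset.mem_product, Finset.mem_filter] at hx ⊢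
      obtain ⟨⟨q, hq, rfl⟩, rfl⟩ := hx
      exact ⟨q.2, hq.2, rfl⟩
    calc _ ≤ (Dt A t).card ^ 2 := by gcongr
      _ = (Dt A t).card * (Dt A t).card := sq _
      _ ≤ A.card ^ 2 * (Dt A t).card := by gcongr; omega

lemma exists_tau (M : ℕ) (hM : 0 < M) : ∃ τ : ℕ, 0 < τ ∧ M ^ 2 ≤ τ ^ 3 ∧ τ ^ 3 ≤ 8 * M ^ 2 := by
  have hex : ∃ τ : ℕ, M ^ 2 ≤ τ ^ 3 := ⟨M, Nat.pow_le_pow_right hM (by norm_num)⟩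
  classical
  have hs := Nat.find_spec hex
  have hpos : 0 < Nat.find hex := by
    rcases Nat.eq_zero_or_pos (Nat.find hex) with h | h
    · rw [h] at hs
      have : 0 < M ^ 2 := by positivity
      simp at hs; omega
    · exact h
  refine ⟨Nat.find hex, hpos, hs, ?_⟩
  obtain ⟨k, hk⟩ : ∃ k, Nat.find hex = k + 1 := ⟨Nat.find hex - 1, by omega⟩
  have hm : ¬ M ^ 2 ≤ k ^ 3 := Nat.find_min hex (by omega)
  rw [hk]
  have : 1 ≤ M ^ 2 := Nat.one_le_iff_ne_zero.mpr (by positivity)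
  rcases Nat.eq_zero_or_pos k with h | h
  · subst h; omega
  · calc (k + 1) ^ 3 ≤ (2 * k) ^ 3 := by gcongr; omega
      _ = 8 * k ^ 3 := by ring
      _ ≤ _ := by omega

lemma E3_bound (κ : ℝ) (hκ : 0 < κ) : ∃ C : ℝ, 0 < C ∧ ∀ (p : ℕ) [Fact p.Prime]
    (A : Finset (ZMod p)), A.Nonempty → 0 ∉ A →
    ((A.card * (A * A).card * (A - A).card : ℕ) : ℝ) ≤ κ * (p : ℝ) ^ 2 →
    (E3 A : ℝ) ^ 3 ≤ C * (A.card : ℝ) ^ 6 * ((A * A).card : ℝ) ^ 4 := by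
  obtain ⟨C, hC, h⟩ := D_bound κ hκ
  refine ⟨(3 + 3 * C) ^ 3 * 64, by positivity, ?_⟩
  intro p _ A hA h0 hN
  have hD := h p A hA h0 hN
  have ha : 0 < A.card := hA.card_pos
  have hM := card_mul_ge A hA h0
  obtain ⟨τ, hτ, h1, h2⟩ := exists_tau (A * A).card (by omega)
  have hE : (E3 A : ℝ) ≤ 3 * τ ^ 2 * A.card ^ 2 +
      ∑ t ∈ Finset.Ioc τ A.card, 3 * (t : ℝ) ^ 2 * (Dt A t).card := by
    exact_mod_cast E3_le A τ
  set M : ℝ := ((A * A).card : ℝ) with hMdef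
  set a : ℝ := (A.card : ℝ) with hadef
  have hτ' : (0 : ℝ) < τ := by exact_mod_cast hτ
  have h1' : M ^ 2 ≤ (τ : ℝ) ^ 3 := by rw [hMdef]; exact_mod_cast h1
  have h2' : (τ : ℝ) ^ 3 ≤ 8 * M ^ 2 := by rw [hMdef]; exact_mod_cast h2
  have hsum : ∑ t ∈ Finset.Ioc τ A.card, 3 * (t : ℝ) ^ 2 * (Dt A t).card ≤
      3 * C * τ ^ 2 * a ^ 2 := by
    have hb : ∀ t ∈ Finset.Ioc τ A.card, 3 * (t : ℝ) ^ 2 * (Dt A t).card ≤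
        3 * (C * M ^ 2 * a ^ 2) * ((t : ℝ) ^ 2)⁻¹ := by
      intro t ht
      have htp : 0 < t := by simp at ht; omega
      have ht' : (0 : ℝ) < t := by exact_mod_cast htp
      rw [← div_eq_mul_inv, le_div_iff₀ (by positivity)]
      have := hD t
      nlinarith
    refine (Finset.sum_le_sum hb).trans ?_
    rw [← Finset.mul_sum]
    have hs : ∑ t ∈ Finset.Ioc τ A.card, ((t : ℝ) ^ 2)⁻¹ ≤ (τ : ℝ)⁻¹ := by
      rcases le_total τ A.card with hle | hle
      · refine (sum_Ioc_inv_sq_le_sub hτ.ne' hle).trans ?_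
        have : (0 : ℝ) ≤ (A.card : ℝ)⁻¹ := by positivity
        linarith
      · rw [Finset.Ioc_eq_empty_of_le hle]; simp
    calc 3 * (C * M ^ 2 * a ^ 2) * ∑ t ∈ Finset.Ioc τ A.card, ((t : ℝ) ^ 2)⁻¹
        ≤ 3 * (C * τ ^ 3 * a ^ 2) * (τ : ℝ)⁻¹ := by gcongr
      _ = _ := by field_simp
  have hE' : (E3 A : ℝ) ≤ (3 + 3 * C) * τ ^ 2 * a ^ 2 := by linarith
  calc (E3 A : ℝ) ^ 3 ≤ ((3 + 3 * C) * τ ^ 2 * a ^ 2) ^ 3 := by gcongr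
    _ = (3 + 3 * C) ^ 3 * a ^ 6 * ((τ : ℝ) ^ 3) ^ 2 := by ring
    _ ≤ (3 + 3 * C) ^ 3 * a ^ 6 * (8 * M ^ 2) ^ 2 := by gcongr
    _ = _ := by ring

lemma combine (κ : ℝ) (hκ : 0 < κ) : ∃ C : ℝ, 0 < C ∧ ∀ (p : ℕ) [Fact p.Prime]
    (A : Finset (ZMod p)), A.Nonempty → 0 ∉ A →
    ((A.card * (A * A).card * (A - A).card : ℕ) : ℝ) ≤ κ * (p : ℝ) ^ 2 →
    (A.card : ℝ) ^ 39 ≤ C * ((A - A).card : ℝ) ^ 15 * ((A * A).card : ℝ) ^ 17 := by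
  obtain ⟨C1, hC1, h1⟩ := E_bound κ hκ
  obtain ⟨C2, hC2, h2⟩ := E3_bound κ hκ
  refine ⟨8 ^ 6 * C1 ^ 3 * C2 ^ 2, by positivity, ?_⟩
  intro p _ A hA h0 hN
  have e1 := h1 p A hA h0 hN
  have e2 := h2 p A hA h0 hN
  have e3 : (A.card : ℝ) ^ 8 ≤ 8 * (A - A).card * EE A * E3 A := by
    exact_mod_cast third_moment A hA
  have ha : (0 : ℝ) < A.card := by exact_mod_cast hA.card_pos
  set a : ℝ := (A.card : ℝ)
  set D : ℝ := ((A - A).card : ℝ)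
  set M : ℝ := ((A * A).card : ℝ)
  have : a ^ 12 * a ^ 39 ≤ a ^ 12 * (8 ^ 6 * C1 ^ 3 * C2 ^ 2 * D ^ 15 * M ^ 17) := by
    calc a ^ 12 * a ^ 39 = a ^ 3 * (a ^ 8) ^ 6 := by ring
      _ ≤ a ^ 3 * (8 * D * EE A * E3 A) ^ 6 := by gcongr
      _ = 8 ^ 6 * D ^ 6 * (a * (EE A : ℝ) ^ 2) ^ 3 * ((E3 A : ℝ) ^ 3) ^ 2 := by ring
      _ ≤ 8 ^ 6 * D ^ 6 * (C1 * M ^ 3 * D ^ 3) ^ 3 * (C2 * a ^ 6 * M ^ 4) ^ 2 := by gcongr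
      _ = _ := by ring
  exact le_of_mul_le_mul_left this (by positivity)

end SP

theorem stmt_17 :
    ∀ K : ℝ, 0 < K →
      ∃ C : ℝ, 0 < C ∧
        ∀ (p : ℕ), p.Prime →
          ∀ (A : Finset (ZMod p)), A.Nonempty →
            (A.card : ℝ) ≤ K * (p : ℝ) ^ ((32 : ℝ) / 55) →
            (A.card : ℝ) ^ ((39 : ℝ) / 32) ≤
              C * (max 1 (Real.log A.card)) ^ C * (max (A - A).card (A * A).card : ℕ) := by
  intro K hK
  obtain ⟨C0, hC0, hc⟩ := SP.combine (K ^ ((55 : ℝ) / 16)) (by positivity)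
  set C : ℝ := 1 + (2 ^ 39 * C0) ^ ((1 : ℝ) / 32) with hCdef
  have hCr : 0 < (2 ^ 39 * C0) ^ ((1 : ℝ) / 32) := by positivity
  have hC1 : 1 ≤ C := by linarith
  refine ⟨C, by linarith, ?_⟩
  intro p hp A hA hAK
  have : Fact p.Prime := ⟨hp⟩
  set m : ℕ := max (A - A).card (A * A).card with hm
  have hlog : (1 : ℝ) ≤ (max 1 (Real.log A.card)) ^ C :=
    Real.one_le_rpow (le_max_left _ _) (by linarith)
  have ha1 : 1 ≤ A.card := hA.card_pos
  have hDm : (A - A).card ≤ m := le_max_left _ _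
  have hMm : (A * A).card ≤ m := le_max_right _ _
  have hAm : A.card ≤ m := (SP.card_sub_ge A hA).trans hDm
  suffices hs : (A.card : ℝ) ^ ((39 : ℝ) / 32) ≤ C * m by
    calc (A.card : ℝ) ^ ((39 : ℝ) / 32) ≤ C * 1 * m := by simpa using hs
      _ ≤ _ := by gcongr
  by_cases hbig : (A.card : ℝ) ^ ((39 : ℝ) / 32) ≤ m
  · exact hbig.trans (le_mul_of_one_le_left (by positivity) hC1)
  push Not at hbig
  have ha2 : 2 ≤ A.card := by
    by_contra hlt
    have h1 : A.card = 1 := by omega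
    rw [h1] at hbig hAm
    simp at hbig
    omega
  have hapos : (0 : ℝ) < A.card := by exact_mod_cast ha1
  set B := A.erase 0 with hB
  have hBA : B ⊆ A := Finset.erase_subset _ _
  have hBc : A.card ≤ 2 * B.card := by
    have : A.card - 1 ≤ B.card := Finset.pred_card_le_card_erase
    omega
  have hBne : B.Nonempty := Finset.card_pos.mp (by omega)
  have hBD : (B - B).card ≤ m := (Finset.card_le_card (Finset.sub_subset_sub hBA hBA)).trans hDm
  have hBM : (B * B).card ≤ m := (Finset.card_le_card (Finset.mul_subset_mul hBA hBA)).trans hMm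
  have hN : ((B.card * (B * B).card * (B - B).card : ℕ) : ℝ) ≤
      K ^ ((55 : ℝ) / 16) * (p : ℝ) ^ 2 := by
    have q1 : (B.card : ℝ) ≤ A.card := by exact_mod_cast Finset.card_le_card hBA
    have q2 : ((B - B).card : ℝ) ≤ (A.card : ℝ) ^ ((39 : ℝ) / 32) :=
      le_trans (by exact_mod_cast hBD) hbig.le
    have q3 : ((B * B).card : ℝ) ≤ (A.card : ℝ) ^ ((39 : ℝ) / 32) :=
      le_trans (by exact_mod_cast hBM) hbig.le
    push_cast
    calc (B.card : ℝ) * (B * B).card * (B - B).card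
        ≤ A.card * (A.card : ℝ) ^ ((39 : ℝ) / 32) * (A.card : ℝ) ^ ((39 : ℝ) / 32) := by gcongr
      _ = (A.card : ℝ) ^ ((55 : ℝ) / 16) := by
        nth_rewrite 1 [← Real.rpow_one (A.card : ℝ)]
        rw [← Real.rpow_add hapos, ← Real.rpow_add hapos]
        norm_num
      _ ≤ (K * (p : ℝ) ^ ((32 : ℝ) / 55)) ^ ((55 : ℝ) / 16) := by gcongr
      _ = _ := by
        rw [Real.mul_rpow hK.le (by positivity), ← Real.rpow_mul (by positivity)]
        norm_num
  have hfin := hc p B hBne (by simp [hB]) hN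
  have hBD' : ((B - B).card : ℝ) ≤ m := by exact_mod_cast hBD
  have hBM' : ((B * B).card : ℝ) ≤ m := by exact_mod_cast hBM
  have hBc' : (A.card : ℝ) ≤ 2 * B.card := by exact_mod_cast hBc
  have h32 : (A.card : ℝ) ^ 39 ≤ (2 ^ 39 * C0) * (m : ℝ) ^ 32 := by
    calc (A.card : ℝ) ^ 39 ≤ (2 * B.card) ^ 39 := by gcongr
      _ = 2 ^ 39 * (B.card : ℝ) ^ 39 := by ring
      _ ≤ 2 ^ 39 * (C0 * ((B - B).card : ℝ) ^ 15 * ((B * B).card : ℝ) ^ 17) := by gcongr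
      _ ≤ 2 ^ 39 * (C0 * (m : ℝ) ^ 15 * (m : ℝ) ^ 17) := by gcongr
      _ = _ := by ring
  have h33 : (A.card : ℝ) ^ ((39 : ℝ) / 32) ≤ (2 ^ 39 * C0) ^ ((1 : ℝ) / 32) * m := by
    have := Real.rpow_le_rpow (by positivity) h32 (show (0 : ℝ) ≤ 1 / 32 by norm_num)
    rw [Real.mul_rpow (by positivity) (by positivity), ← Real.rpow_natCast,
      ← Real.rpow_natCast (m : ℝ), ← Real.rpow_mul (by positivity),
      ← Real.rpow_mul (by positivity)] at this
    norm_num at this ⊢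
    exact this
  refine h33.trans ?_
  gcongr
  linarith
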